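/- For any constant 0 < c < 1, if q is a squarefree positive integer with φ(q) > 8c^{-1}e²(log m)², then for m sufficiently large, the number of m-tuples a ∈ ((ℤ/qℤ)^×)^m such that π(x;q,a) → ∞ as x → ∞ is at least ((1-c)c⁵ m / (512 e^{10} (log m)^{10})) · φ(q)(φ(q)-1). -/

import Mathlib

open Filter

/-- `π(x; q, a)`: the number of indices `n` with `p_n ≤ x` such that the `m` consecutive
primes `p_n, p_{n+1}, …, p_{n+m-1}` satisfy `p_{n+i} ≡ a_i (mod q)` for all `i`. -/
noncomputable def consecCount (q m : ℕ) (a : Fin m → (ZMod q)ˣ) (x : ℝ) : ℕ :=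
  Set.ncard {n : ℕ | (Nat.nth Nat.Prime n : ℝ) ≤ x ∧
    ∀ i : Fin m, ((Nat.nth Nat.Prime (n + (i : ℕ)) : ℕ) : ZMod q) = (a i : ZMod q)}


lemma sum_crt (a b : ℕ) (ha : 0 < a) (hb : 0 < b) (hab : Nat.Coprime a b) (A B : ℕ → ℝ)
    (hA : Function.Periodic A a) (hB : Function.Periodic B b) :
    ∑ t ∈ Finset.range (a * b), A t * B t =
      (∑ t ∈ Finset.range a, A t) * (∑ t ∈ Finset.range b, B t) := by
  rw [Finset.sum_mul_sum, ← Finset.sum_product']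
  refine Finset.sum_nbij (fun t => (t % a, t % b)) ?_ ?_ ?_ ?_
  · intro t _
    simp [Nat.mod_lt _ ha, Nat.mod_lt _ hb]
  · intro s hs t ht h
    simp only [Finset.coe_range, Set.mem_Iio, Prod.mk.injEq] at hs ht h
    have : s ≡ t [MOD a * b] := (Nat.modEq_and_modEq_iff_modEq_mul hab).1 ⟨h.1, h.2⟩
    exact Nat.ModEq.eq_of_lt_of_lt this hs ht
  · rintro ⟨u, v⟩ huv
    simp only [Finset.coe_product, Finset.coe_range, Set.mem_prod, Set.mem_Iio] at huv
    refine ⟨(Nat.chineseRemainder hab u v : ℕ), ?_, ?_⟩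
    · simp only [Finset.coe_range, Set.mem_Iio]
      exact Nat.chineseRemainder_lt_mul hab u v ha.ne' hb.ne'
    · have h := (Nat.chineseRemainder hab u v).2
      simp only [Prod.mk.injEq]
      exact ⟨by rw [h.1, Nat.mod_eq_of_lt huv.1], by rw [h.2, Nat.mod_eq_of_lt huv.2]⟩
  · intro t _
    simp only
    rw [hA.map_mod_nat, hB.map_mod_nat]

lemma prod_periodic (E : Finset ℕ) (u : ℕ → ℕ → ℝ) (hu : ∀ l ∈ E, Function.Periodic (u l) l) :
    Function.Periodic (fun t => ∏ l ∈ E, u l t) (∏ l ∈ E, l) := by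
  intro t
  refine Finset.prod_congr rfl fun l hl => ?_
  obtain ⟨c, hc⟩ := Finset.dvd_prod_of_mem (fun l : ℕ => l) hl
  rw [hc, mul_comm]
  exact (hu l hl).nat_mul c t

lemma sum_crt_prod (E : Finset ℕ) (hE : ∀ l ∈ E, l.Prime) (u : ℕ → ℕ → ℝ)
    (hu : ∀ l ∈ E, Function.Periodic (u l) l) :
    ∑ t ∈ Finset.range (∏ l ∈ E, l), ∏ l ∈ E, u l t = ∏ l ∈ E, ∑ t ∈ Finset.range l, u l t := by
  induction E using Finset.induction_on with
  | empty => simp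
  | insert p E hp ih =>
    rw [Finset.prod_insert hp, Finset.prod_insert hp,
      ← ih (fun l hl => hE l (Finset.mem_insert_of_mem hl))
        (fun l hl => hu l (Finset.mem_insert_of_mem hl))]
    have h1 : ∀ t, ∏ l ∈ insert p E, u l t = u p t * ∏ l ∈ E, u l t := fun t =>
      Finset.prod_insert hp
    simp_rw [h1]
    refine sum_crt _ _ (hE p (Finset.mem_insert_self _ _)).pos
      (Finset.prod_pos fun l hl => (hE l (Finset.mem_insert_of_mem hl)).pos) ?_ _ _
      (hu p (Finset.mem_insert_self _ _))
      (prod_periodic E u fun l hl => hu l (Finset.mem_insert_of_mem hl))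
    refine Nat.Coprime.prod_right fun l hl => ?_
    refine (Nat.coprime_primes (hE p (Finset.mem_insert_self _ _))
      (hE l (Finset.mem_insert_of_mem hl))).2 ?_
    rintro rfl
    exact hp hl

lemma period_sum (Q : ℕ) (hQ : 0 < Q) (F : ℕ → ℝ) (hF : Function.Periodic F Q) (M μ : ℝ)
    (hM : ∀ t, |F t| ≤ M) (hμ : 0 ≤ μ) (h : ∑ t ∈ Finset.range Q, F t = Q * μ) (N : ℕ) :
    ∑ t ∈ Finset.range N, F t ≤ N * μ + Q * M := by
  have key : ∀ c : ℕ, ∑ t ∈ Finset.range (Q * c), F t = c * (Q * μ) := by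
    intro c
    induction c with
    | zero => simp
    | succ c ih =>
      rw [Nat.mul_succ, Finset.sum_range_add, ih]
      have : ∀ t, F (Q * c + t) = F t := by
        intro t
        rw [add_comm, mul_comm]; exact hF.nat_mul c t
      simp_rw [this]
      rw [h]; push_cast; ring
  have hM0 : 0 ≤ M := (abs_nonneg _).trans (hM 0)
  have hN : N = Q * (N / Q) + N % Q := (Nat.div_add_mod N Q).symm
  conv_lhs => rw [hN, Finset.sum_range_add, key]
  have h1 : ∑ t ∈ Finset.range (N % Q), F (Q * (N / Q) + t) ≤ (N % Q : ℕ) * M := by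
    have := Finset.sum_le_card_nsmul (Finset.range (N % Q)) (fun t => F (Q * (N / Q) + t)) M
      (fun t _ => (le_abs_self _).trans (hM _))
    simpa using this
  have h2 : ((N % Q : ℕ) : ℝ) ≤ Q := by exact_mod_cast (Nat.mod_lt N hQ).le
  have h3 : ((N / Q : ℕ) : ℝ) * Q ≤ N := by exact_mod_cast Nat.div_mul_le_self N Q
  nlinarith [mul_le_mul_of_nonneg_right h2 hM0, mul_le_mul_of_nonneg_right h3 hμ]

/-- Upper bound sieve: `k` residue classes removed modulo each prime of `P`. -/
lemma sieve_upper (k : ℕ) (hk : 1 ≤ k) (P : Finset ℕ) (hP : ∀ l ∈ P, l.Prime)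
    (hPk : ∀ l ∈ P, 2 * k ≤ l) (B : ℕ → ℕ → Prop) [∀ l t, Decidable (B l t)]
    (hB : ∀ l ∈ P, ∀ t, B l (t + l) ↔ B l t)
    (hc : ∀ l ∈ P, ((Finset.range l).filter (B l)).card = k) (z N : ℕ) (hz : 1 ≤ z) :
    (((Finset.range N).filter (fun t => ∀ l ∈ P, ¬ B l t)).card : ℝ) *
      (∑ D ∈ P.powerset.filter (fun D => ∏ l ∈ D, l ≤ z), ∏ l ∈ D, ((k : ℝ) / (l - k)))
      ≤ N + (z : ℝ) ^ 6 := by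
  classical
  set 𝒟 := P.powerset.filter (fun D => ∏ l ∈ D, l ≤ z) with h𝒟
  set h : ℕ → ℝ := fun l => (k : ℝ) / (l - k) with hh
  set f : ℕ → ℕ → ℝ := fun l t => if B l t then 1 - (l : ℝ) / k else 1 with hf
  set S := ∑ D ∈ 𝒟, ∏ l ∈ D, h l with hS
  have hk0 : (0 : ℝ) < k := by exact_mod_cast hk
  have hlk : ∀ l ∈ P, (2 * k : ℝ) ≤ l := fun l hl => by exact_mod_cast hPk l hl
  have hhpos : ∀ l ∈ P, 0 < h l := fun l hl => div_pos hk0 (by linarith [hlk l hl])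
  have hh1 : ∀ l ∈ P, h l ≤ 1 := fun l hl => by
    rw [hh]; simp only; rw [div_le_one (by linarith [hlk l hl])]; linarith [hlk l hl]
  have h𝒟P : ∀ D ∈ 𝒟, D ⊆ P := fun D hD => Finset.mem_powerset.1 (Finset.mem_filter.1 hD).1
  have h𝒟z : ∀ D ∈ 𝒟, ∏ l ∈ D, l ≤ z := fun D hD => (Finset.mem_filter.1 hD).2
  have hwpos : ∀ D ∈ 𝒟, 0 < ∏ l ∈ D, h l := fun D hD =>
    Finset.prod_pos fun l hl => hhpos l (h𝒟P D hD hl)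
  have hw1 : ∀ D ∈ 𝒟, ∏ l ∈ D, h l ≤ 1 := fun D hD =>
    Finset.prod_le_one (fun l hl => (hhpos l (h𝒟P D hD hl)).le) fun l hl => hh1 l (h𝒟P D hD hl)
  have hempty : ∅ ∈ 𝒟 := by simp [h𝒟, hz]
  have hS1 : 1 ≤ S := by
    have := Finset.single_le_sum (f := fun D => ∏ l ∈ D, h l) (fun D hD => (hwpos D hD).le) hempty
    simpa using this
  have hfper : ∀ l ∈ P, Function.Periodic (f l) l := by
    intro l hl t
    simp only [hf, hB l hl t]
  have hfabs : ∀ l ∈ P, ∀ t, |f l t| ≤ l := by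
    intro l hl t
    have h2 := hlk l hl
    have hk1 : (1 : ℝ) ≤ k := by exact_mod_cast hk
    simp only [hf]
    split_ifs
    · have : (l : ℝ) / k ≤ l := div_le_self (by linarith) hk1
      have h3 : 0 ≤ (l : ℝ) / k := by positivity
      rw [abs_le]; constructor <;> linarith
    · rw [abs_one]; linarith
  have hfsum : ∀ l ∈ P, ∑ t ∈ Finset.range l, f l t = 0 := by
    intro l hl
    have : ∀ t, f l t = 1 - if B l t then (l : ℝ) / k else 0 := by
      intro t; simp only [hf]; split_ifs <;> ring
    simp_rw [this]
    rw [Finset.sum_sub_distrib, ← Finset.sum_filter, Finset.sum_const, Finset.sum_const, hc l hl]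
    simp; field_simp; simp
  have hfsum2 : ∀ l ∈ P, ∑ t ∈ Finset.range l, f l t * f l t = l * (h l)⁻¹ := by
    intro l hl
    have : ∀ t, f l t * f l t = 1 + if B l t then (1 - (l : ℝ) / k) ^ 2 - 1 else 0 := by
      intro t; simp only [hf]; split_ifs <;> ring
    simp_rw [this]
    rw [Finset.sum_add_distrib, ← Finset.sum_filter, Finset.sum_const, Finset.sum_const, hc l hl]
    have h2 := hlk l hl
    have : (l : ℝ) - k ≠ 0 := by linarith
    simp [hh]; field_simp; ring
  have hcard : (𝒟.card : ℝ) ≤ z := by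
    have : 𝒟.card ≤ (Finset.Icc 1 z).card := by
      refine Finset.card_le_card_of_injOn (fun D => ∏ l ∈ D, l) ?_ ?_
      · intro D hD
        simp only [Finset.coe_Icc, Set.mem_Icc]
        exact ⟨Finset.prod_pos fun l hl => (hP l (h𝒟P D hD hl)).pos, h𝒟z D hD⟩
      · intro D hD D' hD' he
        simp only at he
        have e1 := Nat.primeFactors_prod (s := D) fun l hl => hP l (h𝒟P D hD hl)
        have e2 := Nat.primeFactors_prod (s := D') fun l hl => hP l (h𝒟P D' hD' hl)
        rw [← e1, ← e2, he]
    rw [Nat.card_Icc] at this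
    exact_mod_cast this
  have hz1 : (1 : ℝ) ≤ z := by exact_mod_cast hz
  have habsD : ∀ D ∈ 𝒟, ∀ t, |∏ l ∈ D, f l t| ≤ z := by
    intro D hD t
    rw [Finset.abs_prod]
    refine (Finset.prod_le_prod (fun l _ => abs_nonneg _)
      fun l hl => hfabs l (h𝒟P D hD hl) t).trans ?_
    rw [← Nat.cast_prod]
    exact_mod_cast h𝒟z D hD
  have hpair : ∀ D ∈ 𝒟, ∀ D' ∈ 𝒟, ∑ t ∈ Finset.range N, (∏ l ∈ D, f l t) * (∏ l ∈ D', f l t) ≤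
      N * (if D = D' then (∏ l ∈ D, h l)⁻¹ else 0) + (z : ℝ) ^ 4 := by
    intro D hD D' hD'
    set u : ℕ → ℕ → ℝ := fun l t => (if l ∈ D then f l t else 1) * (if l ∈ D' then f l t else 1)
      with hu
    have hDu : ∀ l ∈ D ∪ D', l ∈ P := by
      intro l hl
      rcases Finset.mem_union.1 hl with h' | h'
      · exact h𝒟P D hD h'
      · exact h𝒟P D' hD' h'
    have e : ∀ t, (∏ l ∈ D, f l t) * (∏ l ∈ D', f l t) = ∏ l ∈ D ∪ D', u l t := by
      intro t
      simp only [hu]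
      rw [Finset.prod_mul_distrib]
      congr 1
      · rw [Finset.prod_ite_mem, Finset.union_inter_cancel_left]
      · rw [Finset.prod_ite_mem, Finset.union_inter_cancel_right]
    have huper : ∀ l ∈ D ∪ D', Function.Periodic (u l) l := by
      intro l hl t
      simp only [hu, hfper l (hDu l hl) t]
    have hQ : (∏ l ∈ D ∪ D', l) ≤ z ^ 2 := by
      have := Finset.prod_union_inter (s₁ := D) (s₂ := D') (f := fun l : ℕ => l)
      have hi : 1 ≤ ∏ l ∈ D ∩ D', l := Finset.prod_pos fun l hl =>
        (hP l (h𝒟P D hD (Finset.mem_inter.1 hl).1)).pos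
      calc (∏ l ∈ D ∪ D', l) ≤ (∏ l ∈ D ∪ D', l) * ∏ l ∈ D ∩ D', l := Nat.le_mul_of_pos_right _ hi
        _ = (∏ l ∈ D, l) * ∏ l ∈ D', l := this
        _ ≤ z * z := Nat.mul_le_mul (h𝒟z D hD) (h𝒟z D' hD')
        _ = z ^ 2 := by ring
    have hps := period_sum (∏ l ∈ D ∪ D', l)
      (Finset.prod_pos fun l hl => (hP l (hDu l hl)).pos) (fun t => ∏ l ∈ D ∪ D', u l t)
      (prod_periodic _ u huper) ((z : ℝ) ^ 2) (if D = D' then (∏ l ∈ D, h l)⁻¹ else 0)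
      (by
        intro t
        rw [← e, abs_mul, pow_two]
        exact mul_le_mul (habsD D hD t) (habsD D' hD' t) (abs_nonneg _) (by linarith))
      (by
        split_ifs
        · exact (inv_pos.2 (hwpos D hD)).le
        · exact le_rfl)
      (by
        rw [sum_crt_prod _ (fun l hl => hP l (hDu l hl)) u huper]
        split_ifs with hDD
        · subst hDD
          rw [Finset.union_self, ← Finset.prod_inv_distrib, Nat.cast_prod,
            ← Finset.prod_mul_distrib]
          refine Finset.prod_congr rfl fun l hl => ?_
          rw [← hfsum2 l (h𝒟P D hD hl)]
          simp [hu, hl]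
        · rw [mul_zero]
          have : ∃ l, (l ∈ D ∧ l ∉ D') ∨ (l ∉ D ∧ l ∈ D') := by
            by_contra hcon
            push Not at hcon
            apply hDD
            ext l
            have := hcon l
            tauto
          obtain ⟨l, hl⟩ := this
          have hlu : l ∈ D ∪ D' := by rw [Finset.mem_union]; tauto
          refine Finset.prod_eq_zero hlu ?_
          rw [← hfsum l (hDu l hlu)]
          refine Finset.sum_congr rfl fun t _ => ?_
          rcases hl with hl | hl <;> simp [hu, hl])
      N
    simp_rw [e]
    refine hps.trans ?_
    have hQ' : ((∏ l ∈ D ∪ D', l : ℕ) : ℝ) ≤ (z : ℝ) ^ 2 := by exact_mod_cast hQ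
    have : ((∏ l ∈ D ∪ D', l : ℕ) : ℝ) * (z : ℝ) ^ 2 ≤ (z : ℝ) ^ 4 := by
      calc _ ≤ (z : ℝ) ^ 2 * (z : ℝ) ^ 2 := by gcongr
        _ = _ := by ring
    linarith
  have hsq : ∑ t ∈ Finset.range N, (∑ D ∈ 𝒟, (∏ l ∈ D, h l) * ∏ l ∈ D, f l t) ^ 2 ≤
      N * S + (z : ℝ) ^ 6 := by
    have e : ∑ t ∈ Finset.range N, (∑ D ∈ 𝒟, (∏ l ∈ D, h l) * ∏ l ∈ D, f l t) ^ 2 =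
        ∑ D ∈ 𝒟, ∑ D' ∈ 𝒟, (∏ l ∈ D, h l) * (∏ l ∈ D', h l) *
          ∑ t ∈ Finset.range N, (∏ l ∈ D, f l t) * (∏ l ∈ D', f l t) := by
      simp_rw [pow_two, Finset.sum_mul_sum, Finset.mul_sum]
      rw [Finset.sum_comm]
      refine Finset.sum_congr rfl fun D _ => ?_
      rw [Finset.sum_comm]
      refine Finset.sum_congr rfl fun D' _ => Finset.sum_congr rfl fun t _ => ?_
      ring
    rw [e]
    calc _ ≤ ∑ D ∈ 𝒟, ∑ D' ∈ 𝒟, ((if D = D' then N * (∏ l ∈ D, h l) else 0) + (z : ℝ) ^ 4) := by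
          refine Finset.sum_le_sum fun D hD => Finset.sum_le_sum fun D' hD' => ?_
          have h1 := hwpos D hD
          have h2 := hwpos D' hD'
          refine (mul_le_mul_of_nonneg_left (hpair D hD D' hD') (mul_pos h1 h2).le).trans ?_
          rw [mul_add]
          have h3 : (∏ l ∈ D, h l) * (∏ l ∈ D', h l) * (z : ℝ) ^ 4 ≤ (z : ℝ) ^ 4 := by
            have : (∏ l ∈ D, h l) * (∏ l ∈ D', h l) ≤ 1 :=
              mul_le_one₀ (hw1 D hD) h2.le (hw1 D' hD')
            exact mul_le_of_le_one_left (by positivity) this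
          refine add_le_add ?_ h3
          split_ifs with hDD
          · subst hDD
            apply le_of_eq
            field_simp
          · simp
      _ = N * S + 𝒟.card * 𝒟.card * (z : ℝ) ^ 4 := by
          simp_rw [Finset.sum_add_distrib, Finset.sum_ite_eq]
          simp only [Finset.sum_const, nsmul_eq_mul]
          rw [Finset.sum_congr rfl (fun D hD => if_pos hD), ← Finset.mul_sum]
          ring
      _ ≤ N * S + z * z * (z : ℝ) ^ 4 := by gcongr
      _ = _ := by ring
  have hlow : (((Finset.range N).filter (fun t => ∀ l ∈ P, ¬ B l t)).card : ℝ) * S ^ 2 ≤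
      ∑ t ∈ Finset.range N, (∑ D ∈ 𝒟, (∏ l ∈ D, h l) * ∏ l ∈ D, f l t) ^ 2 := by
    rw [← nsmul_eq_mul, ← Finset.sum_const]
    refine (Finset.sum_le_sum (g := fun t => (∑ D ∈ 𝒟, (∏ l ∈ D, h l) * ∏ l ∈ D, f l t) ^ 2)
      ?_).trans (Finset.sum_le_sum_of_subset_of_nonneg (Finset.filter_subset _ _)
        fun t _ _ => sq_nonneg _)
    intro t ht
    apply le_of_eq
    congr 1
    refine Finset.sum_congr rfl fun D hD => ?_
    rw [Finset.prod_congr rfl (g := fun _ => (1 : ℝ)) (s₂ := D) (f := fun l => f l t)]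
    · simp
    · intro l hl
      simp [hf, (Finset.mem_filter.1 ht).2 l (h𝒟P D hD hl)]
  have hfin := hlow.trans hsq
  have hz6 : (z : ℝ) ^ 6 ≤ (z : ℝ) ^ 6 * S := le_mul_of_one_le_right (by positivity) hS1
  have hS0 : 0 < S := by linarith
  refine le_of_mul_le_mul_right ?_ hS0
  nlinarith

lemma sum_powerset_weight (P : Finset ℕ) (h c : ℕ → ℝ) (hh : ∀ l ∈ P, 0 ≤ h l) :
    ∑ D ∈ P.powerset, (∏ l ∈ D, h l) * ∑ l ∈ D, c l =
      (∏ l ∈ P, (1 + h l)) * ∑ l ∈ P, c l * (h l / (1 + h l)) := by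
  induction P using Finset.induction_on with
  | empty => simp
  | insert p P hp ih =>
    have hne : 1 + h p ≠ 0 := by
      have := hh p (Finset.mem_insert_self _ _); linarith
    rw [Finset.sum_powerset_insert hp, ih (fun l hl => hh l (Finset.mem_insert_of_mem hl)),
      Finset.prod_insert hp, Finset.sum_insert hp]
    have e : ∑ D ∈ P.powerset, (∏ l ∈ insert p D, h l) * ∑ l ∈ insert p D, c l =
        h p * c p * (∏ l ∈ P, (1 + h l)) +
          h p * ∑ D ∈ P.powerset, (∏ l ∈ D, h l) * ∑ l ∈ D, c l := by
      rw [Finset.prod_one_add, Finset.mul_sum, Finset.mul_sum, ← Finset.sum_add_distrib]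
      refine Finset.sum_congr rfl fun D hD => ?_
      have : p ∉ D := fun hpD => hp (Finset.mem_powerset.1 hD hpD)
      rw [Finset.prod_insert this, Finset.sum_insert this]
      ring
    rw [e, ih (fun l hl => hh l (Finset.mem_insert_of_mem hl))]
    field_simp
    ring

lemma sieve_S_lower (k : ℕ) (hk : 1 ≤ k) (P : Finset ℕ) (hP : ∀ l ∈ P, l.Prime)
    (hPk : ∀ l ∈ P, 2 * k ≤ l) (z : ℕ) (hz : 2 ≤ z)
    (hlog : 2 * k * ∑ l ∈ P, Real.log l / l ≤ Real.log z) :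
    (∏ l ∈ P, (1 - (k : ℝ) / l))⁻¹ ≤
      2 * ∑ D ∈ P.powerset.filter (fun D => ∏ l ∈ D, l ≤ z), ∏ l ∈ D, ((k : ℝ) / (l - k)) := by
  classical
  set h : ℕ → ℝ := fun l => (k : ℝ) / (l - k) with hh
  have hk0 : (0 : ℝ) < k := by exact_mod_cast hk
  have hlk : ∀ l ∈ P, (2 * k : ℝ) ≤ l := fun l hl => by exact_mod_cast hPk l hl
  have hhpos : ∀ l ∈ P, 0 < h l := fun l hl => div_pos hk0 (by linarith [hlk l hl])
  have e1 : (∏ l ∈ P, (1 - (k : ℝ) / l))⁻¹ = ∏ l ∈ P, (1 + h l) := by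
    rw [← Finset.prod_inv_distrib]
    refine Finset.prod_congr rfl fun l hl => ?_
    have h2 := hlk l hl
    have h3 : (l : ℝ) - k ≠ 0 := by linarith
    have h4 : (l : ℝ) ≠ 0 := by linarith
    simp only [hh]
    field_simp
    simp
  have hw := sum_powerset_weight P h (fun l => Real.log l) (fun l hl => (hhpos l hl).le)
  have e2 : ∑ l ∈ P, Real.log l * (h l / (1 + h l)) = k * ∑ l ∈ P, Real.log l / l := by
    rw [Finset.mul_sum]
    refine Finset.sum_congr rfl fun l hl => ?_
    have h2 := hlk l hl
    have h3 : (l : ℝ) - k ≠ 0 := by linarith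
    have h4 : (l : ℝ) ≠ 0 := by linarith
    have h5 : 1 + h l = l / (l - k) := by simp only [hh]; field_simp; ring
    rw [h5]; simp only [hh]
    field_simp
  rw [e2] at hw
  rw [e1]
  set Pi0 := ∏ l ∈ P, (1 + h l) with hPi
  have hPi0 : 0 < Pi0 := Finset.prod_pos fun l hl => by linarith [hhpos l hl]
  have hlz : 0 < Real.log z := Real.log_pos (by exact_mod_cast hz)
  have hsplit : Pi0 = ∑ D ∈ P.powerset.filter (fun D => ∏ l ∈ D, l ≤ z), ∏ l ∈ D, h l +
      ∑ D ∈ P.powerset.filter (fun D => ¬ ∏ l ∈ D, l ≤ z), ∏ l ∈ D, h l := by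
    rw [Finset.sum_filter_add_sum_filter_not, hPi, Finset.prod_one_add]
  have htail : (∑ D ∈ P.powerset.filter (fun D => ¬ ∏ l ∈ D, l ≤ z), ∏ l ∈ D, h l) * Real.log z ≤
      ∑ D ∈ P.powerset, (∏ l ∈ D, h l) * ∑ l ∈ D, Real.log l := by
    rw [Finset.sum_mul]
    refine (Finset.sum_le_sum
      (g := fun D => (∏ l ∈ D, h l) * ∑ l ∈ D, Real.log l) ?_).trans
      (Finset.sum_le_sum_of_subset_of_nonneg (Finset.filter_subset _ _) ?_)
    · intro D hD
      rw [Finset.mem_filter, Finset.mem_powerset] at hD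
      have hp0 : 0 ≤ ∏ l ∈ D, h l := Finset.prod_nonneg fun l hl => (hhpos l (hD.1 hl)).le
      refine mul_le_mul_of_nonneg_left ?_ hp0
      rw [← Real.log_prod (fun l hl => by
        have := (hP l (hD.1 hl)).pos
        positivity)]
      refine Real.log_le_log (by positivity) ?_
      have := (not_le.1 hD.2).le
      rw [← Nat.cast_prod]
      exact_mod_cast this
    · intro D hD _
      rw [Finset.mem_powerset] at hD
      exact mul_nonneg (Finset.prod_nonneg fun l hl => (hhpos l (hD hl)).le)
        (Finset.sum_nonneg fun l _ => Real.log_natCast_nonneg l)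
  rw [hw] at htail
  have : (∑ D ∈ P.powerset.filter (fun D => ¬ ∏ l ∈ D, l ≤ z), ∏ l ∈ D, h l) ≤ Pi0 / 2 := by
    refine le_of_mul_le_mul_right ?_ hlz
    nlinarith
  linarith

lemma sum_log_div_le (n : ℕ) (hn : 1 ≤ n) :
    ∑ p ∈ Nat.primesLE n, Real.log p / p ≤ Real.log n + Real.log 4 := by
  have hn0 : (0 : ℝ) < n := by exact_mod_cast hn
  have hdvd : (∏ p ∈ Nat.primesLE n, p ^ (n / p)) ∣ n.factorial := by
    refine Finset.prod_dvd_of_isRelPrime ?_ ?_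
    · intro p hp p' hp' hne
      rw [Function.onFun, ← Nat.coprime_iff_isRelPrime]
      exact ((Nat.coprime_primes (Nat.prime_of_mem_primesLE hp)
        (Nat.prime_of_mem_primesLE hp')).2 hne).pow _ _
    · intro p hp
      have hp' := Nat.prime_of_mem_primesLE hp
      rw [hp'.pow_dvd_factorial_iff (b := Nat.log p n + 2) (by omega)]
      have := Finset.single_le_sum (f := fun i => n / p ^ i) (s := Finset.Ico 1 (Nat.log p n + 2))
        (fun _ _ => Nat.zero_le _) (Finset.mem_Ico.2 ⟨le_rfl, by omega⟩ : 1 ∈ _)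
      simpa using this
  have h1 : ∑ p ∈ Nat.primesLE n, ((n / p : ℕ) : ℝ) * Real.log p ≤ n * Real.log n := by
    have h2 := Nat.le_of_dvd (Nat.factorial_pos n) hdvd
    have h3 : (∏ p ∈ Nat.primesLE n, p ^ (n / p)) ≤ n ^ n := h2.trans (Nat.factorial_le_pow n)
    have h4 : Real.log ((∏ p ∈ Nat.primesLE n, p ^ (n / p) : ℕ) : ℝ) ≤ Real.log ((n ^ n : ℕ) : ℝ) :=
      Real.log_le_log (by
        have : 0 < ∏ p ∈ Nat.primesLE n, p ^ (n / p) :=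
          Finset.prod_pos fun p hp => pow_pos (Nat.prime_of_mem_primesLE hp).pos _
        exact_mod_cast this) (by exact_mod_cast h3)
    rw [Nat.cast_prod, Real.log_prod (fun p hp => by
      have := (Nat.prime_of_mem_primesLE hp).pos
      positivity)] at h4
    simpa [Real.log_pow] using h4
  have h5 : ∑ p ∈ Nat.primesLE n, Real.log p ≤ Real.log 4 * n := by
    rw [← Chebyshev.theta_eq_sum_primesLE_log]
    exact Chebyshev.theta_le_log4_mul_x (by positivity)
  have h6 : ∑ p ∈ Nat.primesLE n, Real.log p / p * n ≤
      ∑ p ∈ Nat.primesLE n, (((n / p : ℕ) : ℝ) * Real.log p + Real.log p) := by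
    refine Finset.sum_le_sum fun p hp => ?_
    have hp' := (Nat.prime_of_mem_primesLE hp).pos
    have h7 : (n : ℝ) / p ≤ (n / p : ℕ) + 1 := by
      exact (Nat.lt_floor_add_one ((n : ℝ) / p)).le.trans_eq (by rw [Nat.floor_div_eq_div])
    have h8 : 0 ≤ Real.log p := Real.log_natCast_nonneg p
    calc Real.log p / p * n = (n / p) * Real.log p := by ring
      _ ≤ ((n / p : ℕ) + 1) * Real.log p := by gcongr
      _ = _ := by ring
  rw [← Finset.sum_mul, Finset.sum_add_distrib] at h6
  refine le_of_mul_le_mul_right ?_ hn0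
  nlinarith

lemma log_le_prod (w : ℕ) :
    Real.log w ≤ ∏ p ∈ Nat.primesLE w, (1 - (p : ℝ)⁻¹)⁻¹ := by
  let f : ℕ →* ℝ := ⟨⟨fun n => (n : ℝ)⁻¹, by simp⟩, by intro a b; simp [mul_comm]⟩
  have h := EulerProduct.summable_and_hasSum_smoothNumbers_prod_primesBelow_geometric (f := f)
    (fun {p} hp => by
      have : (1 : ℝ) < p := by exact_mod_cast hp.one_lt
      simp only [f, MonoidHom.coe_mk, OneHom.coe_mk, norm_inv, Real.norm_natCast]
      exact inv_lt_one_of_one_lt₀ this) (w + 1)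
  have h2 : ∏ p ∈ Nat.primesLE w, (1 - (p : ℝ)⁻¹)⁻¹ = ∏ p ∈ (w + 1).primesBelow, (1 - f p)⁻¹ := rfl
  rw [h2]
  have hs : ∀ n ∈ Finset.Icc 1 w, n ∈ (w + 1).smoothNumbers := by
    intro n hn
    rw [Finset.mem_Icc] at hn
    rw [Nat.mem_smoothNumbers]
    refine ⟨by omega, fun p hp => ?_⟩
    have := Nat.le_of_mem_primeFactorsList hp
    omega
  let e : Finset ((w + 1).smoothNumbers) := (Finset.Icc 1 w).attach.map
    ⟨fun n => ⟨n.1, hs n.1 n.2⟩, fun a b hab => Subtype.ext (by simpa using hab)⟩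
  have h3 := sum_le_hasSum e (fun m _ => by simp [f]) h.2
  refine le_trans ?_ h3
  have h5 : ∑ i ∈ e, f i = ∑ n ∈ Finset.Icc 1 w, (n : ℝ)⁻¹ := by
    rw [Finset.sum_map]
    exact Finset.sum_attach (Finset.Icc 1 w) (fun n => (n : ℝ)⁻¹)
  rw [h5]
  have h4 := log_add_one_le_harmonic w
  rw [harmonic_eq_sum_Icc] at h4
  push_cast at h4
  rcases Nat.eq_zero_or_pos w with rfl | hw
  · simp
  · refine le_trans (Real.log_le_log (by exact_mod_cast hw) (by linarith)) h4

lemma mertens_prod_le : ∃ C : ℝ, 1 ≤ C ∧ ∀ y : ℕ, 1 ≤ y →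
    ∏ p ∈ Nat.primesLE y, (1 - (p : ℝ)⁻¹)⁻¹ ≤ C * (y : ℝ) ^ ((1 : ℝ) / 12) := by
  obtain ⟨T, hT⟩ := exists_nat_gt (Real.exp 24)
  refine ⟨2 ^ (T + 1) * Real.exp (Real.log 4 / 12), ?_, ?_⟩
  · have h1 : (1 : ℝ) ≤ 2 ^ (T + 1) := one_le_pow₀ (by norm_num)
    have h2 : 1 ≤ Real.exp (Real.log 4 / 12) :=
      Real.one_le_exp (div_nonneg (Real.log_nonneg (by norm_num)) (by norm_num))
    nlinarith
  intro y hy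
  have hy0 : (0 : ℝ) < y := by exact_mod_cast hy
  have hterm : ∀ p ∈ Nat.primesLE y, (1 - (p : ℝ)⁻¹)⁻¹ ≤
      (if p ≤ T then 2 else 1) * Real.exp (Real.log p / p / 12) := by
    intro p hp
    have hp2 : (2 : ℝ) ≤ p := by exact_mod_cast (Nat.prime_of_mem_primesLE hp).two_le
    have hp0 : (0 : ℝ) < p := by linarith
    have hu : (p : ℝ)⁻¹ ≤ 1 / 2 := by
      rw [inv_le_comm₀ hp0 (by norm_num)]; linarith
    have hu0 : 0 < (p : ℝ)⁻¹ := by positivity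
    have hlog : 0 ≤ Real.log p := Real.log_nonneg (by linarith)
    split_ifs with hpT
    · have h1 : (1 - (p : ℝ)⁻¹)⁻¹ ≤ 2 := by
        rw [inv_le_comm₀ (by linarith) (by norm_num)]; linarith
      have h2 : 1 ≤ Real.exp (Real.log p / p / 12) := Real.one_le_exp (by positivity)
      linarith
    · push Not at hpT
      have hpT' : (T : ℝ) < p := by exact_mod_cast hpT
      have h24 : 24 ≤ Real.log p := by
        rw [Real.le_log_iff_exp_le hp0]; linarith
      have h1 : (1 - (p : ℝ)⁻¹)⁻¹ ≤ 1 + 2 * (p : ℝ)⁻¹ := by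
        rw [inv_le_iff_one_le_mul₀ (by linarith)]; nlinarith
      have h2 : 1 + 2 * (p : ℝ)⁻¹ ≤ Real.exp (2 * (p : ℝ)⁻¹) := by
        linarith [Real.add_one_le_exp (2 * (p : ℝ)⁻¹)]
      have h3 : Real.exp (2 * (p : ℝ)⁻¹) ≤ Real.exp (Real.log p / p / 12) := by
        apply Real.exp_le_exp.2
        rw [div_eq_mul_inv (Real.log p)]
        nlinarith
      linarith
  calc ∏ p ∈ Nat.primesLE y, (1 - (p : ℝ)⁻¹)⁻¹
      ≤ ∏ p ∈ Nat.primesLE y, ((if p ≤ T then 2 else 1) * Real.exp (Real.log p / p / 12)) := by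
        refine Finset.prod_le_prod (fun p hp => ?_) hterm
        have hp2 : (2 : ℝ) ≤ p := by exact_mod_cast (Nat.prime_of_mem_primesLE hp).two_le
        have : (p : ℝ)⁻¹ ≤ 1 := inv_le_one_of_one_le₀ (by linarith)
        exact inv_nonneg.2 (by linarith)
    _ = (∏ p ∈ Nat.primesLE y, (if p ≤ T then (2 : ℝ) else 1)) *
          Real.exp ((∑ p ∈ Nat.primesLE y, Real.log p / p) / 12) := by
        rw [Finset.prod_mul_distrib, ← Real.exp_sum, Finset.sum_div]
    _ ≤ 2 ^ (T + 1) * Real.exp ((Real.log y + Real.log 4) / 12) := by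
        have h1 : (∏ p ∈ Nat.primesLE y, (if p ≤ T then (2 : ℝ) else 1)) ≤ 2 ^ (T + 1) := by
          rw [← Finset.prod_filter, Finset.prod_const]
          refine pow_le_pow_right₀ (by norm_num) ?_
          calc _ ≤ (Finset.range (T + 1)).card := Finset.card_le_card (by
                intro p hp
                have := (Finset.mem_filter.1 hp).2
                simp; omega)
            _ = T + 1 := by simp
        gcongr
        exact sum_log_div_le y hy
    _ = _ := by
        rw [add_div, Real.exp_add, Real.rpow_def_of_pos hy0]
        ring_nf

lemma sift_shift (k : ℕ) (hk : 1 ≤ k) (q : ℕ) (hq : 0 < q) (r : ℕ) (h : Fin k → ℕ)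
    (P : Finset ℕ) (hP : ∀ l ∈ P, l.Prime) (hPk : ∀ l ∈ P, 2 * k ≤ l)
    (hPq : ∀ l ∈ P, ¬ l ∣ q) (hPh : ∀ l ∈ P, ∀ i j, i < j → ¬ (l : ℤ) ∣ (h j : ℤ) - h i)
    (w z X : ℕ) (hPw : ∀ l ∈ P, l ≤ w) (hz : 2 ≤ z)
    (hlog : 2 * k * ∑ l ∈ P, Real.log l / l ≤ Real.log z) :
    (((Finset.range (X + 1)).filter
      (fun n => n % q = r ∧ ∀ i, (n + h i).Prime ∧ w < n + h i)).card : ℝ) ≤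
      ((X / q : ℕ) + 1 + (z : ℝ) ^ 6) * (2 * ∏ l ∈ P, (1 - (k : ℝ) / l)) := by
  classical
  set B : ℕ → ℕ → Prop := fun l t => ∃ i, l ∣ r + q * t + h i with hBdef
  have hB : ∀ l ∈ P, ∀ t, B l (t + l) ↔ B l t := by
    intro l _ t
    refine exists_congr fun i => ?_
    have : r + q * (t + l) + h i = (r + q * t + h i) + l * q := by ring
    rw [this, Nat.dvd_add_left (dvd_mul_right l q)]
  have hc : ∀ l ∈ P, ((Finset.range l).filter (B l)).card = k := by
    intro l hl
    haveI : Fact l.Prime := ⟨hP l hl⟩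
    have hq0 : (q : ZMod l) ≠ 0 := by
      intro h0
      exact hPq l hl ((ZMod.natCast_eq_zero_iff q l).1 h0)
    set g : Fin k → ℕ := fun i => (-((r : ZMod l) + h i) / q).val with hg
    have hginj : Function.Injective g := by
      intro i j hij
      have h1 := ZMod.val_injective l hij
      have h2 : (h i : ZMod l) = h j := by
        field_simp at h1
        linear_combination -h1
      by_contra hne
      rcases lt_or_gt_of_ne hne with hlt | hlt
      · apply hPh l hl i j hlt
        rw [← ZMod.intCast_zmod_eq_zero_iff_dvd]
        push_cast; rw [h2]; ring
      · apply hPh l hl j i hlt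
        rw [← ZMod.intCast_zmod_eq_zero_iff_dvd]
        push_cast; rw [h2]; ring
    have himg : (Finset.range l).filter (B l) = Finset.univ.image g := by
      ext t
      simp only [Finset.mem_filter, Finset.mem_range, Finset.mem_image, Finset.mem_univ, true_and,
        hBdef]
      constructor
      · rintro ⟨htl, i, hi⟩
        refine ⟨i, ?_⟩
        rw [← ZMod.natCast_eq_zero_iff] at hi
        push_cast at hi
        have : (-((r : ZMod l) + h i) / q) = (t : ZMod l) := by
          field_simp
          linear_combination -hi
        simp only [hg, this]
        exact ZMod.val_cast_of_lt htl
      · rintro ⟨i, rfl⟩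
        refine ⟨ZMod.val_lt _, i, ?_⟩
        rw [← ZMod.natCast_eq_zero_iff]
        push_cast
        simp only [hg, ZMod.natCast_val, ZMod.cast_id', id_eq]
        field_simp
        ring
    rw [himg, Finset.card_image_of_injective _ hginj, Finset.card_univ, Fintype.card_fin]
  have hs := sieve_upper k hk P hP hPk B hB hc z (X / q + 1) (by omega)
  have hS := sieve_S_lower k hk P hP hPk z hz hlog
  set S := ∑ D ∈ P.powerset.filter (fun D => ∏ l ∈ D, l ≤ z), ∏ l ∈ D, ((k : ℝ) / (l - k)) with hSdef
  have hPi : 0 < ∏ l ∈ P, (1 - (k : ℝ) / l) := by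
    refine Finset.prod_pos fun l hl => ?_
    have h1 : (2 * k : ℝ) ≤ l := by exact_mod_cast hPk l hl
    have h2 : (1 : ℝ) ≤ k := by exact_mod_cast hk
    rw [sub_pos, div_lt_one (by linarith)]
    linarith
  have hcard : (((Finset.range (X + 1)).filter
      (fun n => n % q = r ∧ ∀ i, (n + h i).Prime ∧ w < n + h i)).card : ℝ) ≤
      (((Finset.range (X / q + 1)).filter (fun t => ∀ l ∈ P, ¬ B l t)).card : ℝ) := by
    norm_cast
    refine Finset.card_le_card_of_injOn (fun n => n / q) ?_ ?_
    · intro n hn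
      simp only [Finset.coe_filter, Finset.mem_range, Set.mem_setOf_eq] at hn ⊢
      refine ⟨Nat.lt_succ_of_le (Nat.div_le_div_right (by omega)), ?_⟩
      rintro l hl ⟨i, hi⟩
      have e : r + q * (n / q) = n := by rw [← hn.2.1, Nat.mod_add_div]
      rw [e] at hi
      obtain ⟨h1, h2⟩ := hn.2.2 i
      have h3 := (Nat.prime_dvd_prime_iff_eq (hP l hl) h1).1 hi
      have := hPw l hl
      omega
    · intro a ha b hb hab
      simp only [Finset.coe_filter, Finset.mem_range, Set.mem_setOf_eq] at ha hb hab
      rw [← Nat.mod_add_div a q, ← Nat.mod_add_div b q, ha.2.1, hb.2.1, hab]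
  refine hcard.trans ?_
  set A : ℝ := (((Finset.range (X / q + 1)).filter (fun t => ∀ l ∈ P, ¬ B l t)).card : ℝ) with hA
  have hA0 : 0 ≤ A := Nat.cast_nonneg _
  have h1 : A * (∏ l ∈ P, (1 - (k : ℝ) / l))⁻¹ ≤ 2 * ((X / q : ℕ) + 1 + (z : ℝ) ^ 6) := by
    calc _ ≤ A * (2 * S) := mul_le_mul_of_nonneg_left hS hA0
      _ = 2 * (A * S) := by ring
      _ ≤ _ := by push_cast at hs; linarith
  rw [← div_eq_mul_inv, div_le_iff₀ hPi] at h1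
  linarith

lemma prod_le_sum_pow {ι : Type*} (s : Finset ι) (hs : s.Nonempty) (x : ι → ℝ)
    (hx : ∀ i ∈ s, 1 ≤ x i) : ∏ i ∈ s, x i ≤ ∑ i ∈ s, x i ^ s.card := by
  obtain ⟨m, hm, hmax⟩ := s.exists_max_image x hs
  calc ∏ i ∈ s, x i ≤ ∏ _i ∈ s, x m :=
        Finset.prod_le_prod (fun i hi => by linarith [hx i hi]) hmax
    _ = x m ^ s.card := by simp
    _ ≤ _ := Finset.single_le_sum (f := fun i => x i ^ s.card)
        (fun i hi => by have := hx i hi; positivity) hm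

/-- The product over bad primes is dominated by a divisor sum. -/
lemma bad_prod_le (k : ℕ) (hk : 2 ≤ k) (q : ℕ) (h : Fin k → ℕ) (hh : StrictMono h)
    (H : ℕ) (hH : ∀ i j, i < j → h j - h i ≤ H) (y : ℕ) (hy : 4 * k ^ 6 ≤ y) (w : ℕ) :
    ∏ l ∈ (Nat.primesLE w).filter
        (fun l => y < l ∧ ¬ l ∣ q ∧ ∃ i j, i < j ∧ l ∣ h j - h i), ((1 - (l : ℝ)⁻¹)⁻¹) ^ k ≤
      ∑ p ∈ (Finset.univ : Finset (Fin k × Fin k)).filter (fun p => p.1 < p.2),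
        ∑ d ∈ (Finset.Icc 1 H).filter (fun d => Nat.Coprime d q),
          if d ∣ h p.2 - h p.1 then (Real.sqrt d)⁻¹ else 0 := by
  classical
  set pairs := (Finset.univ : Finset (Fin k × Fin k)).filter (fun p => p.1 < p.2) with hpairs
  set bad : Fin k × Fin k → Finset ℕ := fun p => (Nat.primesLE w).filter
    (fun l => y < l ∧ ¬ l ∣ q ∧ l ∣ h p.2 - h p.1) with hbad
  set v : ℕ → ℝ := fun l => (1 - (l : ℝ)⁻¹)⁻¹ with hv
  have hv1 : ∀ l ∈ Nat.primesLE w, 1 ≤ v l := by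
    intro l hl
    have h2 : (2 : ℝ) ≤ l := by exact_mod_cast (Nat.prime_of_mem_primesLE hl).two_le
    have h3 : (l : ℝ)⁻¹ < 1 := inv_lt_one_of_one_lt₀ (by linarith)
    have h4 : 0 < (l : ℝ)⁻¹ := by positivity
    exact (one_le_inv₀ (by linarith)).2 (by linarith)
  have hne : pairs.Nonempty := ⟨(⟨0, by omega⟩, ⟨1, by omega⟩), by simp [hpairs]⟩
  have hJ : pairs.card ≤ k ^ 2 := by
    refine (Finset.card_le_univ _).trans ?_
    simp [pow_two]
  have step1 : ∏ l ∈ (Nat.primesLE w).filter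
        (fun l => y < l ∧ ¬ l ∣ q ∧ ∃ i j, i < j ∧ l ∣ h j - h i), v l ^ k ≤
      ∏ p ∈ pairs, ∏ l ∈ bad p, v l ^ k := by
    have e : ∀ p, ∏ l ∈ bad p, v l ^ k = ∏ l ∈ Nat.primesLE w, if l ∈ bad p then v l ^ k else 1 := by
      intro p
      rw [Finset.prod_ite_mem, Finset.inter_eq_right.2 (Finset.filter_subset _ _)]
    simp_rw [e]
    rw [Finset.prod_comm, Finset.prod_filter]
    have hone : ∀ l ∈ Nat.primesLE w, ∀ p ∈ pairs, 1 ≤ if l ∈ bad p then v l ^ k else 1 := by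
      intro l hl p _
      split_ifs
      · exact one_le_pow₀ (hv1 l hl)
      · exact le_rfl
    refine Finset.prod_le_prod (fun l hl => ?_) fun l hl => ?_
    · split_ifs
      · have := hv1 l hl; positivity
      · exact zero_le_one
    · split_ifs with hcond
      · obtain ⟨h1, h2, i, j, hij, hd⟩ := hcond
        have hm : (i, j) ∈ pairs := by simp [hpairs, hij]
        have hb : l ∈ bad (i, j) := by simp only [hbad, Finset.mem_filter]; exact ⟨hl, h1, h2, hd⟩
        rw [← Finset.mul_prod_erase _ _ hm, if_pos hb]
        have h3 : 1 ≤ v l ^ k := one_le_pow₀ (hv1 l hl)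
        have h4 : 1 ≤ ∏ p ∈ pairs.erase (i, j), if l ∈ bad p then v l ^ k else 1 :=
          Finset.one_le_prod fun p _ => by
            split_ifs
            · exact h3
            · exact le_rfl
        exact le_mul_of_one_le_right (by linarith) h4
      · exact Finset.one_le_prod fun p _ => by
          split_ifs
          · exact one_le_pow₀ (hv1 l hl)
          · exact le_rfl
  refine step1.trans ((prod_le_sum_pow pairs hne _ ?_).trans (Finset.sum_le_sum ?_))
  · intro p _
    have : ∀ l ∈ bad p, (1 : ℝ) ≤ v l ^ k := fun l hl =>
      one_le_pow₀ (hv1 l (Finset.mem_filter.1 hl).1)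
    calc (1 : ℝ) = ∏ l ∈ bad p, 1 := by simp
      _ ≤ _ := Finset.prod_le_prod (fun _ _ => zero_le_one) this
  · intro p hp
    have hlt : p.1 < p.2 := (Finset.mem_filter.1 hp).2
    have hpos : 0 < h p.2 - h p.1 := Nat.sub_pos_of_lt (hh hlt)
    have hterm : ∀ l ∈ bad p, (v l ^ k) ^ pairs.card ≤ 1 + (Real.sqrt l)⁻¹ := by
      intro l hl
      have hl' := Finset.mem_filter.1 hl
      have h1 := hv1 l hl'.1
      have hly : ((4 * k ^ 6 : ℕ) : ℝ) ≤ l := by exact_mod_cast hy.trans hl'.2.1.le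
      push_cast at hly
      have hk1 : (2 : ℝ) ≤ k := by exact_mod_cast hk
      have hl0 : (0 : ℝ) < l := lt_of_lt_of_le (by positivity) hly
      have hsq : 2 * (k : ℝ) ^ 3 ≤ Real.sqrt l := by
        apply Real.le_sqrt_of_sq_le
        nlinarith
      have hs0 : 0 < Real.sqrt l := Real.sqrt_pos.2 hl0
      have hss : Real.sqrt l * Real.sqrt l = l := Real.mul_self_sqrt hl0.le
      have hinv : (l : ℝ)⁻¹ = (Real.sqrt l)⁻¹ * (Real.sqrt l)⁻¹ := by rw [← mul_inv, hss]
      set s := (Real.sqrt l)⁻¹ with hs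
      have hsp : 0 < s := inv_pos.2 hs0
      have hks : 2 * (k : ℝ) ^ 3 * s ≤ 1 := by
        rw [hs, ← div_eq_mul_inv, div_le_one hs0]; exact hsq
      have hkk : (8 : ℝ) ≤ k ^ 3 := by
        calc (8 : ℝ) = 2 ^ 3 := by norm_num
          _ ≤ _ := by gcongr
      have hs1 : s ≤ 1 / 16 := by nlinarith
      have hpow : (v l ^ k) ^ pairs.card ≤ v l ^ (k ^ 3) := by
        rw [← pow_mul]
        refine pow_le_pow_right₀ h1 ?_
        calc k * pairs.card ≤ k * k ^ 2 := Nat.mul_le_mul_left _ hJ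
          _ = k ^ 3 := by ring
      refine hpow.trans ?_
      have hbern : 1 - (k : ℝ) ^ 3 * (s * s) ≤ (1 - s * s) ^ (k ^ 3) := by
        have := one_add_mul_le_pow (a := -(s * s)) (by nlinarith) (k ^ 3)
        push_cast at this
        calc _ = 1 + (k : ℝ) ^ 3 * -(s * s) := by ring
          _ ≤ _ := this
          _ = _ := by ring
      simp only [hv]
      rw [hinv, inv_pow]
      have hlow : 1 - s / 2 ≤ (1 - s * s) ^ (k ^ 3) := by nlinarith
      rw [inv_le_iff_one_le_mul₀ (by linarith)]
      nlinarith
    calc (∏ l ∈ bad p, v l ^ k) ^ pairs.card = ∏ l ∈ bad p, (v l ^ k) ^ pairs.card := by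
          exact (Finset.prod_pow _ _ _).symm
      _ ≤ ∏ l ∈ bad p, (1 + (Real.sqrt l)⁻¹) := by
          refine Finset.prod_le_prod (fun l hl => ?_) hterm
          have := hv1 l (Finset.mem_filter.1 hl).1
          positivity
      _ = ∑ D ∈ (bad p).powerset, (Real.sqrt (∏ l ∈ D, l : ℕ))⁻¹ := by
          rw [Finset.prod_one_add]
          refine Finset.sum_congr rfl fun D _ => ?_
          rw [Finset.prod_inv_distrib, Nat.cast_prod,
            Real.sqrt_prod D (fun i _ => Nat.cast_nonneg i)]
      _ = ∑ d ∈ (bad p).powerset.image (fun D => ∏ l ∈ D, l), (Real.sqrt (d : ℕ))⁻¹ := by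
          rw [Finset.sum_image]
          intro D hD D' hD' he
          have hD1 := Finset.mem_powerset.1 hD
          have hD2 := Finset.mem_powerset.1 hD'
          simp only at he
          have e1 := Nat.primeFactors_prod (s := D) fun l hl =>
            Nat.prime_of_mem_primesLE (Finset.mem_filter.1 (hD1 hl)).1
          have e2 := Nat.primeFactors_prod (s := D') fun l hl =>
            Nat.prime_of_mem_primesLE (Finset.mem_filter.1 (hD2 hl)).1
          rw [← e1, ← e2, he]
      _ ≤ _ := by
          rw [← Finset.sum_filter]
          refine Finset.sum_le_sum_of_subset_of_nonneg ?_ fun d _ _ => by positivity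
          intro d hd
          obtain ⟨D, hD, rfl⟩ := Finset.mem_image.1 hd
          rw [Finset.mem_powerset] at hD
          have hprime : ∀ l ∈ D, l.Prime := fun l hl =>
            Nat.prime_of_mem_primesLE (Finset.mem_filter.1 (hD hl)).1
          have hdvd : ∏ l ∈ D, l ∣ h p.2 - h p.1 :=
            Finset.prod_primes_dvd _ (fun l hl => (hprime l hl).prime)
              fun l hl => (Finset.mem_filter.1 (hD hl)).2.2.2
          rw [Finset.mem_filter, Finset.mem_filter, Finset.mem_Icc]
          refine ⟨⟨⟨Finset.prod_pos fun l hl => (hprime l hl).pos,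
            (Nat.le_of_dvd hpos hdvd).trans (hH _ _ hlt)⟩, ?_⟩, hdvd⟩
          exact Nat.Coprime.prod_left fun l hl =>
            ((hprime l hl).coprime_iff_not_dvd).2 (Finset.mem_filter.1 (hD hl)).2.2.1

lemma prod_subset_le_aux {s t : Finset ℕ} (hst : s ⊆ t) (f : ℕ → ℝ) (h : ∀ i ∈ t, 1 ≤ f i) :
    ∏ i ∈ s, f i ≤ ∏ i ∈ t, f i := by
  rw [← Finset.prod_sdiff hst]
  refine le_mul_of_one_le_left ?_ ?_
  · exact Finset.prod_nonneg fun i hi => by linarith [h i (hst hi)]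
  · exact Finset.one_le_prod fun i hi => h i (Finset.mem_sdiff.1 hi).1

lemma prod_union_le_aux (s t : Finset ℕ) (f : ℕ → ℝ) (h : ∀ i ∈ s ∪ t, 1 ≤ f i) :
    ∏ i ∈ s ∪ t, f i ≤ (∏ i ∈ s, f i) * ∏ i ∈ t, f i := by
  rw [← Finset.prod_union_inter]
  refine le_mul_of_one_le_right ?_ ?_
  · exact Finset.prod_nonneg fun i hi => by linarith [h i hi]
  · exact Finset.one_le_prod fun i hi => h i
      (Finset.mem_union_left _ (Finset.mem_inter.1 hi).1)

lemma inv_one_sub_prime {l : ℕ} (hl : l.Prime) : 1 ≤ (1 - (l : ℝ)⁻¹)⁻¹ := by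
  have h2 : (2 : ℝ) ≤ l := by exact_mod_cast hl.two_le
  have h3 : (l : ℝ)⁻¹ < 1 := inv_lt_one_of_one_lt₀ (by linarith)
  have h4 : 0 < (l : ℝ)⁻¹ := by positivity
  exact (one_le_inv₀ (by linarith)).2 (by linarith)

lemma prod_primeFactors_eq (q : ℕ) (hq : 0 < q) :
    ∏ p ∈ q.primeFactors, (1 - (p : ℝ)⁻¹)⁻¹ = (q : ℝ) / q.totient := by
  have h := Nat.totient_eq_mul_prod_factors q
  have h' : ((q.totient : ℚ) : ℝ) = ((q : ℚ) * ∏ p ∈ q.primeFactors, (1 - (p : ℚ)⁻¹) : ℚ) := by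
    rw [h]
  push_cast at h'
  have hq0 : (q : ℝ) ≠ 0 := by positivity
  rw [h', Finset.prod_inv_distrib, div_mul_eq_div_div, div_self hq0, one_div]

lemma sift_bound (k : ℕ) (hk : 2 ≤ k) (q : ℕ) (hq : 0 < q) (r : ℕ) (h : Fin k → ℕ)
    (hh : StrictMono h) (H : ℕ) (hH : ∀ i j, i < j → h j - h i ≤ H)
    (w z X : ℕ) (hw : 2 ≤ w) (hz : 2 ≤ z)
    (hlog : 2 * k * (Real.log w + Real.log 4) ≤ Real.log z) (M0 : ℝ)
    (hM0 : ∏ p ∈ Nat.primesLE (4 * k ^ 6), (1 - (p : ℝ)⁻¹)⁻¹ ≤ M0) :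
    (((Finset.range (X+1)).filter
      (fun n => n % q = r ∧ ∀ i, (n + h i).Prime ∧ w < n + h i)).card : ℝ) ≤
    ((X/q : ℕ) + 1 + (z:ℝ)^6) * (2 * ((M0 * ((q : ℝ) / q.totient) / Real.log w) ^ k *
      ∑ p ∈ (Finset.univ : Finset (Fin k × Fin k)).filter (fun p => p.1 < p.2),
        ∑ d ∈ (Finset.Icc 1 H).filter (fun d => Nat.Coprime d q),
          if d ∣ h p.2 - h p.1 then (Real.sqrt d)⁻¹ else 0)) := by
  classical
  set y := 4 * k ^ 6 with hy
  set P := (Nat.primesLE w).filter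
    (fun l => y < l ∧ ¬ l ∣ q ∧ ¬ ∃ i j, i < j ∧ l ∣ h j - h i) with hP
  set B := (Nat.primesLE w).filter
    (fun l => y < l ∧ ¬ l ∣ q ∧ ∃ i j, i < j ∧ l ∣ h j - h i) with hB
  set v : ℕ → ℝ := fun l => (1 - (l : ℝ)⁻¹)⁻¹ with hv
  have hPp : ∀ l ∈ P, l.Prime := fun l hl => Nat.prime_of_mem_primesLE (Finset.mem_filter.1 hl).1
  have hBp : ∀ l ∈ B, l.Prime := fun l hl => Nat.prime_of_mem_primesLE (Finset.mem_filter.1 hl).1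
  have hky : 2 * k ≤ y := by
    rw [hy]
    have : k ≤ k ^ 6 := Nat.le_self_pow (by norm_num) k
    omega
  have hPk : ∀ l ∈ P, 2 * k ≤ l := fun l hl => hky.trans (Finset.mem_filter.1 hl).2.1.le
  have h1 := sift_shift k (by omega) q hq r h P hPp hPk
    (fun l hl => (Finset.mem_filter.1 hl).2.2.1) ?_ w z X
    (fun l hl => (Nat.mem_primesLE.1 (Finset.mem_filter.1 hl).1).1) hz ?_
  · refine h1.trans ?_
    refine mul_le_mul_of_nonneg_left ?_ (by positivity)
    refine mul_le_mul_of_nonneg_left ?_ (by norm_num)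
    have hbad := bad_prod_le k hk q h hh H hH y le_rfl w
    have hlw : 0 < Real.log w := Real.log_pos (by exact_mod_cast hw)
    have hcov : Nat.primesLE w ⊆ P ∪ (B ∪ (Nat.primesLE y ∪ q.primeFactors)) := by
      intro l hl
      have hlp := Nat.prime_of_mem_primesLE hl
      simp only [Finset.mem_union, hP, hB, Finset.mem_filter, Nat.mem_primesLE,
        Nat.mem_primeFactors, hl, true_and, hlp, and_true] 
      have hlw := (Nat.mem_primesLE.1 hl).1
      have : q ≠ 0 := by omega
      by_cases a1 : y < l
      · by_cases a2 : l ∣ q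
        · tauto
        · by_cases a3 : ∃ i j, i < j ∧ l ∣ h j - h i
          · exact Or.inr (Or.inl ⟨a1, a2, a3⟩)
          · exact Or.inl ⟨a1, a2, a3⟩
      · have : l ≤ y := by omega
        tauto
    have hv1 : ∀ l, l.Prime → 1 ≤ v l := fun l hl => inv_one_sub_prime hl
    have hall : ∀ l ∈ P ∪ (B ∪ (Nat.primesLE y ∪ q.primeFactors)), 1 ≤ v l := by
      intro l hl
      refine hv1 l ?_
      simp only [Finset.mem_union] at hl
      rcases hl with hl | hl | hl | hl
      · exact hPp l hl
      · exact hBp l hl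
      · exact Nat.prime_of_mem_primesLE hl
      · exact Nat.prime_of_mem_primeFactors hl
    have hP1 : 1 ≤ ∏ l ∈ P, v l := Finset.one_le_prod fun l hl => hv1 l (hPp l hl)
    have hB1 : 1 ≤ ∏ l ∈ B, v l := Finset.one_le_prod fun l hl => hv1 l (hBp l hl)
    have hM1 : 1 ≤ ∏ l ∈ Nat.primesLE y, v l :=
      Finset.one_le_prod fun l hl => hv1 l (Nat.prime_of_mem_primesLE hl)
    have hqp : 0 ≤ (q : ℝ) / q.totient := by positivity
    have hchain : Real.log w ≤ (∏ l ∈ P, v l) * ((∏ l ∈ B, v l) * (M0 * ((q : ℝ) / q.totient))) := by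
      refine (log_le_prod w).trans ((prod_subset_le_aux hcov v hall).trans ?_)
      refine (prod_union_le_aux _ _ v hall).trans ?_
      refine mul_le_mul_of_nonneg_left ?_ (by linarith)
      refine (prod_union_le_aux _ _ v fun l hl => hall l (Finset.mem_union_right _ hl)).trans ?_
      refine mul_le_mul_of_nonneg_left ?_ (by linarith)
      refine (prod_union_le_aux _ _ v fun l hl => hall l (Finset.mem_union_right _
        (Finset.mem_union_right _ hl))).trans ?_
      rw [prod_primeFactors_eq q hq]
      exact mul_le_mul_of_nonneg_right hM0 hqp
    have hPinv : ∏ l ∈ P, (1 - (l : ℝ)⁻¹) = (∏ l ∈ P, v l)⁻¹ := by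
      simp only [hv, Finset.prod_inv_distrib, inv_inv]
    have hle : ∏ l ∈ P, (1 - (l : ℝ)⁻¹) ≤
        (M0 * ((q : ℝ) / q.totient) / Real.log w) * ∏ l ∈ B, v l := by
      rw [hPinv, inv_le_iff_one_le_mul₀ (by linarith), div_mul_eq_mul_div, div_mul_eq_mul_div,
        one_le_div hlw]
      refine hchain.trans (le_of_eq ?_)
      ring
    have hP0 : ∀ l ∈ P, 0 ≤ 1 - (l : ℝ)⁻¹ := by
      intro l hl
      have := hv1 l (hPp l hl)
      simp only [hv] at this
      by_contra hneg
      push Not at hneg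
      have := inv_lt_zero.2 hneg
      linarith
    calc ∏ l ∈ P, (1 - (k : ℝ) / l) ≤ ∏ l ∈ P, (1 - (l : ℝ)⁻¹) ^ k := by
          refine Finset.prod_le_prod (fun l hl => ?_) fun l hl => ?_
          · have h1 : ((2 * k : ℕ) : ℝ) ≤ l := by exact_mod_cast hPk l hl
            push_cast at h1
            have h2 : (2 : ℝ) ≤ k := by exact_mod_cast hk
            rw [sub_nonneg, div_le_one (by linarith)]
            linarith
          · have := one_add_mul_le_pow (a := -(l : ℝ)⁻¹) (by linarith [hP0 l hl]) k
            calc _ = 1 + (k : ℝ) * -(l : ℝ)⁻¹ := by ring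
              _ ≤ _ := this
              _ = _ := by ring
      _ = (∏ l ∈ P, (1 - (l : ℝ)⁻¹)) ^ k := Finset.prod_pow _ _ _
      _ ≤ ((M0 * ((q : ℝ) / q.totient) / Real.log w) * ∏ l ∈ B, v l) ^ k :=
          pow_le_pow_left₀ (Finset.prod_nonneg hP0) hle k
      _ = (M0 * ((q : ℝ) / q.totient) / Real.log w) ^ k * ∏ l ∈ B, v l ^ k := by
          rw [mul_pow, Finset.prod_pow]
      _ ≤ _ := by
          refine mul_le_mul_of_nonneg_left hbad ?_
          have : 0 ≤ M0 := by linarith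
          positivity
  · intro l hl i j hij hd
    refine (Finset.mem_filter.1 hl).2.2.2 ⟨i, j, hij, ?_⟩
    have := (hh hij).le
    rw [← Nat.cast_sub this] at hd
    exact_mod_cast hd
  · refine le_trans ?_ hlog
    refine mul_le_mul_of_nonneg_left ?_ (by positivity)
    refine le_trans ?_ (sum_log_div_le w (by omega))
    exact Finset.sum_le_sum_of_subset_of_nonneg (Finset.filter_subset _ _)
      fun l hl _ => div_nonneg (Real.log_natCast_nonneg l) (Nat.cast_nonneg l)

noncomputable def gw (q : ℕ) (T : ℝ) (a : ZMod q) (v : ℕ) : ℝ :=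
  if (v : ZMod q) = a then Real.exp (-(v : ℝ) / T) else 0

lemma gw_nonneg (q : ℕ) (T : ℝ) (a : ZMod q) (v : ℕ) : 0 ≤ gw q T a v := by
  unfold gw; split_ifs <;> positivity

lemma geom_class (T : ℝ) (hT : 0 < T) (N : ℕ) (hN : 0 < N) (H : ℕ) (S : Finset ℕ)
    (hS : ∀ v ∈ S, v ≤ H) (hc : ∀ v ∈ S, ∀ u ∈ S, v ≡ u [MOD N]) :
    ∑ v ∈ S, Real.exp (-(v : ℝ) / T) ≤ 1 + T / N := by
  have hN' : (0 : ℝ) < N := by exact_mod_cast hN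
  set x : ℝ := Real.exp (-(N : ℝ) / T) with hx
  have hx1 : x < 1 := by
    rw [hx, Real.exp_lt_one_iff]
    rw [neg_div]; exact neg_neg_of_pos (by positivity)
  have hx0 : 0 < x := Real.exp_pos _
  calc ∑ v ∈ S, Real.exp (-(v : ℝ) / T) ≤ ∑ v ∈ S, x ^ (v / N) := by
        refine Finset.sum_le_sum fun v _ => ?_
        rw [hx, ← Real.exp_nat_mul, Real.exp_le_exp, ← mul_div_assoc]
        have : ((v / N : ℕ) : ℝ) * N ≤ v := by exact_mod_cast Nat.div_mul_le_self v N
        gcongr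
        linarith
    _ = ∑ t ∈ S.image (· / N), x ^ t := by
        rw [Finset.sum_image]
        intro v hv u hu he
        have h1 := hc v hv u hu
        have h2 : v / N = u / N := he
        rw [← Nat.div_add_mod v N, ← Nat.div_add_mod u N, h2, h1]
    _ ≤ ∑ t ∈ Finset.range (H + 1), x ^ t := by
        refine Finset.sum_le_sum_of_subset_of_nonneg ?_ fun _ _ _ => by positivity
        intro t ht
        obtain ⟨v, hv, rfl⟩ := Finset.mem_image.1 ht
        have := hS v hv
        have := Nat.div_le_self v N
        simp only [Finset.mem_range]; omega
    _ ≤ (1 - x)⁻¹ := by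
        rw [← tsum_geometric_of_lt_one hx0.le hx1]
        exact (summable_geometric_of_lt_one hx0.le hx1).sum_le_tsum _ fun _ _ => by positivity
    _ ≤ 1 + T / N := by
        rw [inv_le_iff_one_le_mul₀ (by linarith)]
        have h1 : (N : ℝ) / T + 1 ≤ Real.exp ((N : ℝ) / T) := Real.add_one_le_exp _
        have h2 : x = (Real.exp ((N : ℝ) / T))⁻¹ := by rw [hx, ← Real.exp_neg, neg_div]
        have h3 : x ≤ ((N : ℝ) / T + 1)⁻¹ := by
          rw [h2]; exact inv_anti₀ (by positivity) h1
        have h4 : (1 + T / N) * (1 - ((N : ℝ) / T + 1)⁻¹) = 1 := by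
          field_simp
          ring
        have h5 : 0 < 1 + T / N := by positivity
        nlinarith

lemma gw_sum (q : ℕ) (hq : 0 < q) (T : ℝ) (hT : 0 < T) (a : ZMod q) (H : ℕ) :
    ∑ v : Fin (H + 1), gw q T a v ≤ 1 + T / q := by
  rw [Fin.sum_univ_eq_sum_range (fun v => gw q T a v)]
  unfold gw
  rw [← Finset.sum_filter]
  refine geom_class T hT q hq H _ (fun v hv => ?_) fun v hv u hu => ?_
  · have := Finset.mem_range.1 (Finset.mem_filter.1 hv).1; omega
  · rw [← ZMod.natCast_eq_natCast_iff, (Finset.mem_filter.1 hv).2, (Finset.mem_filter.1 hu).2]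

lemma gw_sum_dvd (q : ℕ) (hq : 0 < q) (T : ℝ) (hT : 0 < T) (a : ZMod q) (H : ℕ) (d : ℕ)
    (hd : 0 < d) (hdq : Nat.Coprime d q) (s : ℕ) :
    ∑ v : Fin (H + 1), gw q T a v * (if d ∣ v + s then 1 else 0) ≤ 1 + T / (d * q) := by
  rw [Fin.sum_univ_eq_sum_range (fun v => gw q T a v * (if d ∣ v + s then 1 else 0))]
  unfold gw
  simp_rw [mul_ite, mul_one, mul_zero, ← ite_and]
  rw [← Finset.sum_filter, ← Nat.cast_mul]
  refine geom_class T hT (d * q) (by positivity) H _ (fun v hv => ?_) fun v hv u hu => ?_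
  · have := Finset.mem_range.1 (Finset.mem_filter.1 hv).1; omega
  · have h1 := (Finset.mem_filter.1 hv).2
    have h2 := (Finset.mem_filter.1 hu).2
    rw [← Nat.modEq_and_modEq_iff_modEq_mul hdq]
    constructor
    · have : v + s ≡ u + s [MOD d] :=
        ((Nat.modEq_zero_iff_dvd).2 h1.1).trans ((Nat.modEq_zero_iff_dvd).2 h2.1).symm
      exact Nat.ModEq.add_right_cancel' s this
    · rw [← ZMod.natCast_eq_natCast_iff, h1.2, h2.2]

lemma gap_sum (r q : ℕ) (hq : 0 < q) (T : ℝ) (hT : 0 < T) (a : Fin (r + 1) → ZMod q) (H : ℕ)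
    (d : ℕ) (hd : 0 < d) (hdq : Nat.Coprime d q) (I : Fin (r + 1) → Prop) [DecidablePred I]
    (i : Fin (r + 1)) (hi : I i) :
    ∑ g : Fin (r + 1) → Fin (H + 1), (∏ j, gw q T (a j) (g j)) *
      (if d ∣ ∑ j, (if I j then (g j : ℕ) else 0) then (1 : ℝ) else 0) ≤
      (1 + T / (d * q)) * (1 + T / q) ^ r := by
  rw [← (Fin.insertNthEquiv (fun _ => Fin (H + 1)) i).sum_comp, Fintype.sum_prod_type,
    Finset.sum_comm]
  simp only [Fin.insertNthEquiv_apply, Fin.prod_univ_succAbove _ i, Fin.sum_univ_succAbove _ i,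
    Fin.insertNth_apply_same, Fin.insertNth_apply_succAbove, if_pos hi]
  calc _ ≤ ∑ g : Fin r → Fin (H + 1), (∏ j, gw q T (a (i.succAbove j)) (g j)) *
        (1 + T / (d * q)) := by
        refine Finset.sum_le_sum fun g _ => ?_
        have hb := gw_sum_dvd q hq T hT (a i) H d hd hdq
          (∑ j, if I (i.succAbove j) then (g j : ℕ) else 0)
        have := mul_le_mul_of_nonneg_left hb
          (Finset.prod_nonneg fun j (_ : j ∈ Finset.univ) =>
            gw_nonneg q T (a (i.succAbove j)) (g j))
        refine le_trans (le_of_eq ?_) this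
        rw [Finset.mul_sum]
        refine Finset.sum_congr rfl fun v _ => ?_
        ring
    _ = (∏ j : Fin r, ∑ v : Fin (H + 1), gw q T (a (i.succAbove j)) v) * (1 + T / (d * q)) := by
        rw [← Finset.sum_mul, Finset.prod_univ_sum, Fintype.piFinset_univ]
    _ ≤ _ := by
        rw [mul_comm]
        refine mul_le_mul_of_nonneg_left ?_ (by positivity)
        calc _ ≤ ∏ _j : Fin r, (1 + T / q) := by
              refine Finset.prod_le_prod (fun j _ => Finset.sum_nonneg fun v _ => gw_nonneg _ _ _ _)
                fun j _ => gw_sum q hq T hT _ H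
          _ = _ := by simp

lemma sum_inv_sqrt (H : ℕ) : ∑ d ∈ Finset.Icc 1 H, (Real.sqrt d)⁻¹ ≤ 2 * Real.sqrt H := by
  induction H with
  | zero => simp
  | succ n ih =>
    rw [Finset.sum_Icc_succ_top (by omega)]
    have h1 : 0 < Real.sqrt ((n + 1 : ℕ) : ℝ) := Real.sqrt_pos.2 (by positivity)
    have h2 : Real.sqrt ((n + 1 : ℕ) : ℝ) ^ 2 = n + 1 := by
      rw [Real.sq_sqrt (by positivity)]; push_cast; ring
    have h3 : Real.sqrt (n : ℝ) ^ 2 = n := Real.sq_sqrt (by positivity)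
    set a := Real.sqrt ((n + 1 : ℕ) : ℝ)
    set b := Real.sqrt (n : ℝ)
    have : a⁻¹ ≤ 2 * a - 2 * b := by
      rw [inv_le_iff_one_le_mul₀ h1]
      nlinarith [sq_nonneg (a - b)]
    linarith

lemma sum_inv_sqrt_mul (H : ℕ) :
    ∑ d ∈ Finset.Icc 1 (H + 1), (Real.sqrt d)⁻¹ / d ≤ 3 - 2 * (Real.sqrt (H + 1 : ℕ))⁻¹ := by
  induction H with
  | zero => norm_num
  | succ n ih =>
    rw [Finset.sum_Icc_succ_top (by omega)]
    have h1 : 0 < Real.sqrt ((n + 1 + 1 : ℕ) : ℝ) := Real.sqrt_pos.2 (by positivity)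
    have h1' : 0 < Real.sqrt ((n + 1 : ℕ) : ℝ) := Real.sqrt_pos.2 (by positivity)
    have h2 : Real.sqrt ((n + 1 + 1 : ℕ) : ℝ) ^ 2 = ((n + 1 + 1 : ℕ) : ℝ) := by
      rw [Real.sq_sqrt (by positivity)]
    have h3 : Real.sqrt ((n + 1 : ℕ) : ℝ) ^ 2 = ((n + 1 : ℕ) : ℝ) := Real.sq_sqrt (by positivity)
    have hab : Real.sqrt ((n + 1 : ℕ) : ℝ) ≤ Real.sqrt ((n + 1 + 1 : ℕ) : ℝ) :=
      Real.sqrt_le_sqrt (by push_cast; linarith)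
    rw [← h2] 
    have h4 : Real.sqrt ((n + 1 + 1 : ℕ) : ℝ) ^ 2 = Real.sqrt ((n + 1 : ℕ) : ℝ) ^ 2 + 1 := by
      rw [h2, h3]; push_cast; ring
    have h5 : Real.sqrt (Real.sqrt ((n + 1 + 1 : ℕ) : ℝ) ^ 2) = Real.sqrt ((n + 1 + 1 : ℕ) : ℝ) :=
      Real.sqrt_sq h1.le
    rw [h5]
    set a := Real.sqrt ((n + 1 + 1 : ℕ) : ℝ)
    set b := Real.sqrt ((n + 1 : ℕ) : ℝ)
    have : a⁻¹ / a ^ 2 ≤ 2 * b⁻¹ - 2 * a⁻¹ := by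
      have e : 2 * b⁻¹ - 2 * a⁻¹ - a⁻¹ / a ^ 2 = (2 * a ^ 2 * (a - b) - b) / (a ^ 3 * b) := by
        field_simp
      have : 0 ≤ (2 * a ^ 2 * (a - b) - b) / (a ^ 3 * b) := by
        apply div_nonneg _ (by positivity)
        have h6 : (a - b) * (2 * a) ≥ 1 := by nlinarith [sq_nonneg (a - b)]
        nlinarith
      linarith
    linarith

lemma sum_d_le (H q : ℕ) (T : ℝ) (hT : 0 < T) :
    ∑ d ∈ (Finset.Icc 1 H).filter (fun d => Nat.Coprime d q),
      (Real.sqrt d)⁻¹ * (1 + T / (d * q)) ≤ 2 * Real.sqrt H + 3 * (T / q) := by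
  calc _ ≤ ∑ d ∈ Finset.Icc 1 H, (Real.sqrt d)⁻¹ * (1 + T / (d * q)) :=
        Finset.sum_le_sum_of_subset_of_nonneg (Finset.filter_subset _ _) fun _ _ _ => by positivity
    _ = ∑ d ∈ Finset.Icc 1 H, (Real.sqrt d)⁻¹ +
        (∑ d ∈ Finset.Icc 1 H, (Real.sqrt d)⁻¹ / d) * (T / q) := by
        rw [Finset.sum_mul, ← Finset.sum_add_distrib]
        refine Finset.sum_congr rfl fun d _ => ?_
        rw [mul_add, mul_one, div_mul_div_comm, mul_div_assoc]
    _ ≤ _ := by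
        refine add_le_add (sum_inv_sqrt H) (mul_le_mul_of_nonneg_right ?_ (by positivity))
        cases H with
        | zero => simp
        | succ n =>
          refine (sum_inv_sqrt_mul n).trans ?_
          have : 0 ≤ (Real.sqrt (n + 1 : ℕ))⁻¹ := by positivity
          linarith

/-- partial sums of a gap vector -/
def psum {r H : ℕ} (g : Fin (r + 1) → Fin (H + 1)) (i : ℕ) : ℕ :=
  ∑ t : Fin (r + 1), if (t : ℕ) < i then (g t : ℕ) else 0

lemma psum_split {r H : ℕ} (g : Fin (r + 1) → Fin (H + 1)) {i j : ℕ} (hij : i ≤ j) :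
    psum g j = psum g i + ∑ t : Fin (r + 1), if i ≤ (t : ℕ) ∧ (t : ℕ) < j then (g t : ℕ) else 0 := by
  unfold psum
  rw [← Finset.sum_add_distrib]
  refine Finset.sum_congr rfl fun t _ => ?_
  split_ifs <;> omega

lemma psum_succ {r H : ℕ} (g : Fin (r + 1) → Fin (H + 1)) (i : ℕ) (hi : i < r + 1) :
    psum g (i + 1) = psum g i + g ⟨i, hi⟩ := by
  rw [psum_split g (Nat.le_succ i), Finset.sum_eq_single ⟨i, hi⟩]
  · simp
  · intro t _ ht
    rw [if_neg]
    intro h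
    exact ht (Fin.ext (by simp; omega))
  · simp

lemma psum_last {r H : ℕ} (g : Fin (r + 1) → Fin (H + 1)) :
    psum g (r + 1) = ∑ t, (g t : ℕ) := by
  unfold psum
  refine Finset.sum_congr rfl fun t _ => ?_
  rw [if_pos t.2]

lemma psum_mono {r H : ℕ} (g : Fin (r + 1) → Fin (H + 1)) : Monotone (psum g) := by
  intro i j hij
  rw [psum_split g hij]; omega

noncomputable def pr (n : ℕ) : ℕ := Nat.nth Nat.Prime n

lemma pr_prime (n : ℕ) : (pr n).Prime := Nat.prime_nth_prime n

lemma pr_strictMono : StrictMono pr := Nat.nth_strictMono Nat.infinite_setOfPred_prime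

open Classical in
noncomputable def goodSet (r q : ℕ) (b : Fin (r + 2) → ZMod q) (H w X : ℕ) : Finset ℕ :=
  (Finset.range (X + 1)).filter (fun n => pr (n + (r + 1)) ≤ X ∧ w < pr n ∧
    pr (n + (r + 1)) - pr n ≤ H ∧ ∀ i : Fin (r + 2), ((pr (n + i) : ℕ) : ZMod q) = b i)

noncomputable def gapv (r H n : ℕ) : Fin (r + 1) → Fin (H + 1) := fun t =>
  ⟨min (pr (n + t + 1) - pr (n + t)) H, by omega⟩

lemma gapv_psum (r H n : ℕ) (h : pr (n + (r + 1)) - pr n ≤ H) (i : ℕ) (hi : i ≤ r + 1) :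
    pr n + psum (gapv r H n) i = pr (n + i) := by
  induction i with
  | zero => simp [psum]
  | succ i ih =>
    rw [psum_succ _ i (by omega), ← add_assoc, ih (by omega)]
    have h1 : pr (n + i) < pr (n + i + 1) := pr_strictMono (by omega)
    have h2 : pr (n + i + 1) ≤ pr (n + (r + 1)) := pr_strictMono.monotone (by omega)
    have h3 : pr n ≤ pr (n + i) := pr_strictMono.monotone (by omega)
    have : ((gapv r H n ⟨i, by omega⟩ : Fin (H + 1)) : ℕ) = min (pr (n + i + 1) - pr (n + i)) H := rfl
    rw [this, min_eq_left (by omega), add_assoc n i 1] at *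
    omega

lemma word_count (r q : ℕ) (hq : 0 < q) (b : Fin (r + 2) → ZMod q) (H w z X : ℕ)
    (hw : 2 ≤ w) (hz : 2 ≤ z)
    (hlog : 2 * (r + 2 : ℕ) * (Real.log w + Real.log 4) ≤ Real.log z) (M0 : ℝ)
    (hM0 : ∏ p ∈ Nat.primesLE (4 * (r + 2) ^ 6), (1 - (p : ℝ)⁻¹)⁻¹ ≤ M0) (hM : 0 ≤ M0)
    (T : ℝ) (hT : 0 < T) :
    ((goodSet r q b H w X).card : ℝ) ≤
    ((X/q : ℕ) + 1 + (z:ℝ)^6) * (2 * ((M0 * ((q : ℝ) / q.totient) / Real.log w) ^ (r + 2) *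
      (Real.exp (H / T) * ((r + 2) ^ 2 * ((1 + T / q) ^ r *
        (2 * Real.sqrt H + 3 * (T / q))))))) := by
  classical
  have : NeZero q := ⟨by omega⟩
  set K : ℝ := ((X/q : ℕ) + 1 + (z:ℝ)^6) with hK
  set R : ℝ := M0 * ((q : ℝ) / q.totient) / Real.log w with hR
  have hR0 : 0 ≤ R := by
    have : 0 ≤ Real.log w := Real.log_natCast_nonneg w
    positivity
  set pairs := (Finset.univ : Finset (Fin (r + 2) × Fin (r + 2))).filter (fun p => p.1 < p.2)
    with hpairs
  set DD := (Finset.Icc 1 H).filter (fun d => Nat.Coprime d q) with hDD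
  set a : Fin (r + 1) → ZMod q := fun t => b t.succ - b t.castSucc with ha
  set F : (Fin (r + 1) → Fin (H + 1)) → ℝ := fun g => ∑ p ∈ pairs, ∑ d ∈ DD,
    if d ∣ psum g p.2 - psum g p.1 then (Real.sqrt d)⁻¹ else 0 with hF
  have hF0 : ∀ g, 0 ≤ F g := fun g => Finset.sum_nonneg fun p _ => Finset.sum_nonneg fun d _ => by
    split_ifs <;> positivity
  have hK0 : 0 ≤ K := by positivity
  have hfib : ∀ g : Fin (r + 1) → Fin (H + 1),
      (((goodSet r q b H w X).filter (fun n => gapv r H n = g)).card : ℝ) ≤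
      Real.exp (H / T) * (∏ j, gw q T (a j) (g j)) * (K * (2 * (R ^ (r + 2) * F g))) := by
    intro g
    have hrhs : 0 ≤ Real.exp (H / T) * (∏ j, gw q T (a j) (g j)) * (K * (2 * (R ^ (r + 2) * F g))) := by
      have := Finset.prod_nonneg fun j (_ : j ∈ Finset.univ) => gw_nonneg q T (a j) (g j)
      have := hF0 g
      positivity
    rcases ((goodSet r q b H w X).filter (fun n => gapv r H n = g)).eq_empty_or_nonempty with he | hne
    · rw [he]; simpa using hrhs
    obtain ⟨n, hn⟩ := hne
    obtain ⟨hn1, hn2⟩ := Finset.mem_filter.1 hn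
    obtain ⟨-, hn3, hn4, hn5, hn6⟩ := Finset.mem_filter.1 hn1
    have hps : ∀ i ≤ r + 1, pr n + psum g i = pr (n + i) := by
      intro i hi; rw [← hn2]; exact gapv_psum r H n hn5 i hi
    have hstrict : StrictMono (fun i : Fin (r + 2) => psum g i) := by
      intro i j hij
      have h1 := hps i (by omega)
      have h2 := hps j (by omega)
      have h3 : pr (n + i) < pr (n + j) := pr_strictMono (by have : (i : ℕ) < j := hij; omega)
      show psum g i < psum g j
      omega
    have htot : psum g (r + 1) ≤ H := by
      have := hps (r + 1) le_rfl; omega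
    have hH : ∀ i j : Fin (r + 2), i < j → psum g j - psum g i ≤ H := by
      intro i j _
      have := psum_mono g (show (j : ℕ) ≤ r + 1 by omega)
      omega
    have hs := sift_bound (r + 2) (by omega) q hq (b 0).val (fun i => psum g i) hstrict H hH w z X
      hw hz hlog M0 hM0
    have hcard : ((goodSet r q b H w X).filter (fun n => gapv r H n = g)).card ≤
        ((Finset.range (X+1)).filter (fun n => n % q = (b 0).val ∧
          ∀ i : Fin (r + 2), (n + psum g i).Prime ∧ w < n + psum g i)).card := by
      refine Finset.card_le_card_of_injOn pr ?_ (pr_strictMono.injective.injOn)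
      intro n hn
      obtain ⟨hn1, hn2⟩ := Finset.mem_filter.1 hn
      obtain ⟨-, hn3, hn4, hn5, hn6⟩ := Finset.mem_filter.1 hn1
      have hps : ∀ i ≤ r + 1, pr n + psum g i = pr (n + i) := by
        intro i hi; rw [← hn2]; exact gapv_psum r H n hn5 i hi
      rw [Finset.mem_coe, Finset.mem_filter]
      refine ⟨?_, ?_, fun i => ?_⟩
      · have : pr n ≤ pr (n + (r + 1)) := pr_strictMono.monotone (by omega)
        simp only [Finset.mem_range]; omega
      · have := hn6 0
        simp only [Fin.val_zero, add_zero] at this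
        rw [← this, ZMod.val_natCast]
      · rw [hps i (by omega)]
        refine ⟨pr_prime _, ?_⟩
        have : pr n ≤ pr (n + i) := pr_strictMono.monotone (by omega)
        omega
    have hrank : 1 ≤ Real.exp (H / T) * (∏ j, gw q T (a j) (g j)) := by
      have e : ∏ j, gw q T (a j) (g j) = Real.exp (-(psum g (r + 1) : ℝ) / T) := by
        rw [psum_last]
        push_cast
        rw [← Finset.sum_neg_distrib, Finset.sum_div, Real.exp_sum]
        refine Finset.prod_congr rfl fun j _ => ?_
        unfold gw
        rw [if_pos]
        have h1 := hps j (by omega)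
        have h2 := hps (j + 1) (by omega)
        rw [psum_succ g j j.2] at h2
        have h3 : ((g j : ℕ) : ZMod q) = (pr (n + (j + 1)) : ℕ) - (pr (n + j) : ℕ) := by
          rw [← h1, ← h2]; push_cast; ring
        rw [h3, ha]
        have h4 := hn6 j.succ
        have h5 := hn6 j.castSucc
        rw [Fin.val_succ] at h4
        rw [Fin.val_castSucc] at h5
        rw [h4, h5]
      rw [e, ← Real.exp_add, Real.one_le_exp_iff, ← add_div]
      apply div_nonneg _ hT.le
      have : (psum g (r + 1) : ℝ) ≤ H := by exact_mod_cast htot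
      linarith
    calc _ ≤ K * (2 * (R ^ (r + 2) * F g)) := le_trans (by exact_mod_cast hcard) hs
      _ ≤ _ := le_mul_of_one_le_left (by have := hF0 g; positivity) hrank
  have hsum : ∑ g : Fin (r + 1) → Fin (H + 1), (∏ j, gw q T (a j) (g j)) * F g ≤
      (r + 2) ^ 2 * ((1 + T / q) ^ r * (2 * Real.sqrt H + 3 * (T / q))) := by
    calc _ = ∑ p ∈ pairs, ∑ d ∈ DD, (Real.sqrt d)⁻¹ *
          ∑ g : Fin (r + 1) → Fin (H + 1), (∏ j, gw q T (a j) (g j)) *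
            (if d ∣ psum g p.2 - psum g p.1 then (1 : ℝ) else 0) := by
          simp only [hF, Finset.mul_sum]
          rw [Finset.sum_comm]
          refine Finset.sum_congr rfl fun p _ => ?_
          rw [Finset.sum_comm]
          refine Finset.sum_congr rfl fun d _ => Finset.sum_congr rfl fun g _ => ?_
          split_ifs <;> ring
      _ ≤ ∑ p ∈ pairs, ∑ d ∈ DD, (Real.sqrt d)⁻¹ * ((1 + T / (d * q)) * (1 + T / q) ^ r) := by
          refine Finset.sum_le_sum fun p hp => Finset.sum_le_sum fun d hd => ?_
          refine mul_le_mul_of_nonneg_left ?_ (by positivity)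
          have hlt : (p.1 : ℕ) < p.2 := (Finset.mem_filter.1 hp).2
          obtain ⟨hd1, hd2⟩ := Finset.mem_filter.1 hd
          have := gap_sum r q hq T hT a H d (by have := Finset.mem_Icc.1 hd1; omega) hd2
            (fun t => (p.1 : ℕ) ≤ t ∧ (t : ℕ) < p.2) ⟨p.1, by omega⟩ ⟨le_rfl, hlt⟩
          refine le_trans (le_of_eq ?_) this
          refine Finset.sum_congr rfl fun g _ => ?_
          rw [psum_split g hlt.le, Nat.add_sub_cancel_left]
      _ = pairs.card * ((1 + T / q) ^ r * ∑ d ∈ DD, (Real.sqrt d)⁻¹ * (1 + T / (d * q))) := by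
          rw [Finset.sum_const, nsmul_eq_mul]
          congr 1
          rw [Finset.mul_sum]
          refine Finset.sum_congr rfl fun d _ => ?_
          ring
      _ ≤ _ := by
          have hc : (pairs.card : ℝ) ≤ (r + 2) ^ 2 := by
            have : pairs.card ≤ (r + 2) ^ 2 := by
              refine (Finset.card_le_univ _).trans ?_
              simp [pow_two]
            exact_mod_cast this
          refine mul_le_mul hc ?_ (by positivity) (by positivity)
          exact mul_le_mul_of_nonneg_left (sum_d_le H q T hT) (by positivity)
  calc ((goodSet r q b H w X).card : ℝ)
      = ∑ g : Fin (r + 1) → Fin (H + 1),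
        (((goodSet r q b H w X).filter (fun n => gapv r H n = g)).card : ℝ) := by
        rw [Finset.card_eq_sum_card_fiberwise (f := gapv r H) (t := Finset.univ)
          (fun _ _ => Finset.mem_coe.2 (Finset.mem_univ _))]
        push_cast; rfl
    _ ≤ ∑ g : Fin (r + 1) → Fin (H + 1),
        Real.exp (H / T) * (∏ j, gw q T (a j) (g j)) * (K * (2 * (R ^ (r + 2) * F g))) :=
        Finset.sum_le_sum fun g _ => hfib g
    _ = K * (2 * (R ^ (r + 2) * (Real.exp (H / T) *
        ∑ g : Fin (r + 1) → Fin (H + 1), (∏ j, gw q T (a j) (g j)) * F g))) := by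
        simp only [Finset.mul_sum]
        refine Finset.sum_congr rfl fun g _ => ?_
        ring
    _ ≤ _ := by gcongr

lemma word_count_eventually (r q : ℕ) (hq : 0 < q) (M0 : ℝ)
    (hM0 : ∏ p ∈ Nat.primesLE (4 * (r + 2) ^ 6), (1 - (p : ℝ)⁻¹)⁻¹ ≤ M0) (hM : 0 ≤ M0) :
    ∀ᶠ u : ℕ in atTop, ∀ b : Fin (r + 2) → ZMod q,
      ((goodSet r q b ⌊4 * (r + 2 : ℝ) * (25 * (r + 2) * Real.log u)⌋₊ u
        (u ^ (25 * (r + 2)))).card : ℝ) ≤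
      16 * (r + 2) ^ 2 * (50 * (r + 2) * M0 * Real.exp 4 / q.totient) ^ (r + 2) *
        ((u : ℝ) ^ (25 * (r + 2)) / (25 * (r + 2) * Real.log u)) := by
  have hlogt : Tendsto (fun u : ℕ => 25 * (r + 2 : ℝ) * Real.log u) atTop atTop :=
    (Real.tendsto_log_atTop.comp tendsto_natCast_atTop_atTop).const_mul_atTop (by positivity)
  filter_upwards [eventually_ge_atTop 4, eventually_ge_atTop (2 * q),
    hlogt.eventually_ge_atTop (q : ℝ),
    hlogt.eventually_ge_atTop (16 * (q : ℝ) ^ 2 * (r + 2))] with u hu4 huq hTq hTq2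
  intro b
  set k : ℝ := (r + 2 : ℝ) with hk
  have hk2 : 2 ≤ k := by rw [hk]; linarith [(Nat.cast_nonneg r : (0 : ℝ) ≤ r)]
  have hu : (4 : ℝ) ≤ u := by exact_mod_cast hu4
  have hlu : 0 < Real.log u := Real.log_pos (by linarith)
  set T : ℝ := 25 * k * Real.log u with hT
  have hT0 : 0 < T := by positivity
  set H := ⌊4 * k * T⌋₊ with hH
  have hHle : (H : ℝ) ≤ 4 * k * T := Nat.floor_le (by positivity)
  have hqR : (1 : ℝ) ≤ q := by exact_mod_cast hq
  have hφ : (0 : ℝ) < q.totient := by exact_mod_cast Nat.totient_pos.2 hq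
  have hlog : 2 * ((r + 2 : ℕ) : ℝ) * (Real.log u + Real.log 4) ≤
      Real.log ((u ^ (4 * (r + 2)) : ℕ) : ℝ) := by
    have h4 : Real.log 4 ≤ Real.log u := Real.log_le_log (by norm_num) hu
    push_cast
    rw [Real.log_pow]
    push_cast
    rw [← hk]
    nlinarith
  have hz : 2 ≤ u ^ (4 * (r + 2)) := by
    calc 2 ≤ u := by omega
      _ ≤ _ := Nat.le_self_pow (by omega) u
  refine (word_count r q hq b H u (u ^ (4 * (r + 2))) (u ^ (25 * (r + 2))) (by omega) hz hlog M0
    hM0 hM T hT0).trans ?_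
  rw [← hk]
  set X : ℝ := (u : ℝ) ^ (25 * (r + 2)) with hX
  have hX0 : 0 < X := by positivity
  have hK : (((u ^ (25 * (r + 2)) / q : ℕ) : ℝ) + 1 + ((u ^ (4 * (r + 2)) : ℕ) : ℝ) ^ 6) ≤
      2 * (X / q) := by
    have h1 : ((u ^ (25 * (r + 2)) / q : ℕ) : ℝ) ≤ X / q := by
      refine Nat.cast_div_le.trans (le_of_eq ?_)
      rw [hX]; push_cast; rfl
    have h2 : (1 : ℝ) ≤ (u : ℝ) ^ (24 * (r + 2)) := one_le_pow₀ (by linarith)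
    have h3 : ((u ^ (4 * (r + 2)) : ℕ) : ℝ) ^ 6 = (u : ℝ) ^ (24 * (r + 2)) := by
      push_cast; rw [← pow_mul]; congr 1; ring
    have h4 : X = (u : ℝ) ^ (24 * (r + 2)) * (u : ℝ) ^ (r + 2) := by
      rw [hX, ← pow_add]; congr 1; ring
    have h5 : (2 * q : ℝ) ≤ (u : ℝ) ^ (r + 2) := by
      calc (2 * q : ℝ) ≤ u := by exact_mod_cast huq
        _ ≤ _ := le_self_pow₀ (by linarith) (by omega)
    have h6 : 2 * (u : ℝ) ^ (24 * (r + 2)) ≤ X / q := by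
      rw [le_div_iff₀ (by linarith), h4]
      nlinarith
    rw [h3]
    linarith
  have hexp : Real.exp (H / T) ≤ Real.exp 4 ^ (r + 2) := by
    rw [← Real.exp_nat_mul, Real.exp_le_exp, div_le_iff₀ hT0]
    push_cast
    rw [← hk]
    linarith
  have hTq1 : 1 ≤ T / q := by rwa [one_le_div (by linarith)]
  have hg1 : (1 + T / q) ^ r ≤ (2 * (T / q)) ^ r :=
    pow_le_pow_left₀ (by positivity) (by linarith) r
  have hg2 : 2 * Real.sqrt H + 3 * (T / q) ≤ 4 * (T / q) := by
    have : Real.sqrt H ≤ T / (2 * q) := by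
      refine Real.sqrt_le_iff.2 ⟨by positivity, hHle.trans ?_⟩
      rw [div_pow, le_div_iff₀ (by positivity)]
      nlinarith
    have e : T / (2 * q) = T / q / 2 := by rw [div_div, mul_comm (q : ℝ) 2]
    rw [e] at this
    linarith
  have hR : M0 * ((q : ℝ) / q.totient) / Real.log u = (25 * k * M0 / q.totient) * (T / q)⁻¹ := by
    rw [hT]; field_simp
  rw [hR]
  calc _ ≤ (2 * (X / q)) * (2 * (((25 * k * M0 / q.totient) * (T / q)⁻¹) ^ (r + 2) *
      (Real.exp 4 ^ (r + 2) * (k ^ 2 * ((2 * (T / q)) ^ r * (4 * (T / q))))))) := by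
        gcongr
    _ = 16 * k ^ 2 * (2 ^ r * (25 * k * M0 * Real.exp 4 / q.totient) ^ (r + 2)) * (X / T) := by
        have hTne : T ≠ 0 := hT0.ne'
        have hqne : (q : ℝ) ≠ 0 := by linarith
        rw [mul_pow (25 * k * M0 / (q.totient : ℝ)), mul_pow 2 (T / q),
          show 25 * k * M0 * Real.exp 4 / (q.totient : ℝ) =
            (25 * k * M0 / (q.totient : ℝ)) * Real.exp 4 by ring, mul_pow _ (Real.exp 4)]
        have e1 : ((T / q)⁻¹) ^ (r + 2) * ((T / q) ^ r * (T / q)) = (T / q)⁻¹ := by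
          rw [pow_add, inv_pow]
          field_simp
        have e2 : X / T = X / q * (T / q)⁻¹ := by field_simp
        rw [e2]
        generalize (T / q)⁻¹ = yi at e1 ⊢
        generalize T / (q : ℝ) = y at e1 ⊢
        generalize 25 * k * M0 / (q.totient : ℝ) = A
        generalize X / (q : ℝ) = Z
        linear_combination (16 * k ^ 2 * 2 ^ r * A ^ (r + 2) * Real.exp 4 ^ (r + 2) * Z) * e1
    _ ≤ _ := by
        have : (2 : ℝ) ^ r * (25 * k * M0 * Real.exp 4 / q.totient) ^ (r + 2) ≤
            (50 * k * M0 * Real.exp 4 / q.totient) ^ (r + 2) := by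
          rw [show 50 * k * M0 * Real.exp 4 / (q.totient : ℝ) =
            2 * (25 * k * M0 * Real.exp 4 / (q.totient : ℝ)) by ring, mul_pow 2]
          have : (2 : ℝ) ^ r ≤ 2 ^ (r + 2) := pow_le_pow_right₀ (by norm_num) (by omega)
          gcongr
        gcongr

lemma sum_gap (s N : ℕ) (X : ℝ) (hX : ∀ n < N + s, (pr n : ℝ) ≤ X) :
    ∑ n ∈ Finset.range N, ((pr (n + s) : ℝ) - pr n) ≤ s * X := by
  have h1 := Finset.sum_range_add (fun n => (pr n : ℝ)) N s
  have h2 := Finset.sum_range_add (fun n => (pr n : ℝ)) s N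
  rw [add_comm s N] at h2
  have h3 : ∑ x ∈ Finset.range s, (pr (N + x) : ℝ) ≤ s * X := by
    calc _ ≤ ∑ x ∈ Finset.range s, X :=
          Finset.sum_le_sum fun x hx => hX _ (by have := Finset.mem_range.1 hx; omega)
      _ = _ := by simp
  have h4 : 0 ≤ ∑ x ∈ Finset.range s, (pr x : ℝ) := Finset.sum_nonneg fun _ _ => by positivity
  rw [Finset.sum_sub_distrib]
  simp_rw [add_comm _ s]
  linarith

lemma many_good (r w X H : ℕ) :
    (Nat.primeCounting X : ℝ) ≤ (((Finset.range (X + 1)).filter (fun n => pr (n + (r + 1)) ≤ X ∧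
      w < pr n ∧ pr (n + (r + 1)) - pr n ≤ H)).card : ℝ) +
      (r + 1) * X / (H + 1) + (w + 1) + (r + 1) := by
  classical
  set N := Nat.primeCounting X - (r + 1) with hN
  rcases Nat.lt_or_ge (Nat.primeCounting X) (r + 1) with hlt | hge
  · have : (Nat.primeCounting X : ℝ) ≤ r + 1 := by exact_mod_cast hlt.le
    have h1 : 0 ≤ ((r : ℝ) + 1) * X / (H + 1) := by positivity
    have h2 : (0 : ℝ) ≤ w := by positivity
    have h3 : (0 : ℝ) ≤ (((Finset.range (X + 1)).filter (fun n => pr (n + (r + 1)) ≤ X ∧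
      w < pr n ∧ pr (n + (r + 1)) - pr n ≤ H)).card : ℝ) := by positivity
    linarith
  have hprX : ∀ n < N + (r + 1), pr n ≤ X := by
    intro n hn
    have : n < Nat.count Nat.Prime (X + 1) := by
      have : n < Nat.primeCounting X := by omega
      exact this
    have := Nat.nth_lt_of_lt_count this
    unfold pr; omega
  have hnle : ∀ n, n ≤ pr n := fun n => pr_strictMono.le_apply
  set G := (Finset.range (X + 1)).filter (fun n => pr (n + (r + 1)) ≤ X ∧
      w < pr n ∧ pr (n + (r + 1)) - pr n ≤ H) with hG
  set B := (Finset.range N).filter (fun n => H < pr (n + (r + 1)) - pr n) with hB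
  have hsub : Finset.range N ⊆ G ∪ (B ∪ Finset.range (w + 1)) := by
    intro n hn
    have hn' := Finset.mem_range.1 hn
    have h1 := hprX (n + (r + 1)) (by omega)
    have h2 := hnle n
    have h3 : pr n ≤ pr (n + (r + 1)) := pr_strictMono.monotone (by omega)
    simp only [Finset.mem_union, hG, hB, Finset.mem_filter, Finset.mem_range]
    omega
  have hcard : (N : ℝ) ≤ G.card + (B.card + (w + 1)) := by
    have h1 := Finset.card_le_card hsub
    have h2 := Finset.card_union_le G (B ∪ Finset.range (w + 1))
    have h3 := Finset.card_union_le B (Finset.range (w + 1))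
    rw [Finset.card_range] at h1 h3
    have : N ≤ G.card + (B.card + (w + 1)) := by omega
    exact_mod_cast this
  have hBc : (B.card : ℝ) ≤ (r + 1) * X / (H + 1) := by
    rw [le_div_iff₀ (by positivity)]
    have h1 := sum_gap (r + 1) N X (fun n hn => by exact_mod_cast hprX n hn)
    push_cast at h1
    refine le_trans ?_ h1
    calc (B.card : ℝ) * (H + 1) = ∑ n ∈ B, ((H : ℝ) + 1) := by
          rw [Finset.sum_const, nsmul_eq_mul]
      _ ≤ ∑ n ∈ B, ((pr (n + (r + 1)) : ℝ) - pr n) := by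
          refine Finset.sum_le_sum fun n hn => ?_
          have := (Finset.mem_filter.1 hn).2
          have h5 : H + 1 + pr n ≤ pr (n + (r + 1)) := by omega
          have : ((H + 1 + pr n : ℕ) : ℝ) ≤ pr (n + (r + 1)) := by exact_mod_cast h5
          push_cast at this
          linarith
      _ ≤ _ := by
          refine Finset.sum_le_sum_of_subset_of_nonneg (Finset.filter_subset _ _) fun n _ _ => ?_
          have : pr n ≤ pr (n + (r + 1)) := pr_strictMono.monotone (by omega)
          have : (pr n : ℝ) ≤ pr (n + (r + 1)) := by exact_mod_cast this
          linarith
  have hNN : (Nat.primeCounting X : ℝ) = N + (r + 1) := by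
    have : Nat.primeCounting X = N + (r + 1) := by omega
    exact_mod_cast this
  rw [hNN]
  linarith

lemma XT_lower (r u : ℕ) (hu : 2 ≤ u) :
    (u : ℝ) ^ 2 / (25 * (r + 2)) ≤ (u : ℝ) ^ (25 * (r + 2)) / (25 * (r + 2) * Real.log u) := by
  have hu' : (2 : ℝ) ≤ u := by exact_mod_cast hu
  have hlu : 0 < Real.log u := Real.log_pos (by linarith)
  have hle : Real.log u ≤ u := (Real.log_le_sub_one_of_pos (by linarith)).trans (by linarith)
  have h3 : (u : ℝ) ^ 3 ≤ (u : ℝ) ^ (25 * (r + 2)) :=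
    pow_le_pow_right₀ (by linarith) (by omega)
  rw [div_le_div_iff₀ (by positivity) (by positivity)]
  have : (u : ℝ) ^ 2 * Real.log u ≤ (u : ℝ) ^ (25 * (r + 2)) := by
    refine le_trans ?_ h3
    nlinarith [sq_nonneg (u : ℝ)]
  have hk : (0 : ℝ) ≤ 25 * (r + 2) := by positivity
  nlinarith

lemma many_good_eventually (r : ℕ) :
    ∀ᶠ u : ℕ in atTop,
      (u : ℝ) ^ (25 * (r + 2)) / (25 * (r + 2) * Real.log u) / 8 ≤
      (((Finset.range (u ^ (25 * (r + 2)) + 1)).filter (fun n =>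
        pr (n + (r + 1)) ≤ u ^ (25 * (r + 2)) ∧ u < pr n ∧
        pr (n + (r + 1)) - pr n ≤ ⌊4 * (r + 2 : ℝ) * (25 * (r + 2) * Real.log u)⌋₊)).card : ℝ) := by
  filter_upwards [eventually_ge_atTop 4, eventually_ge_atTop (64 * (25 * (r + 2)))] with u hu4 hur
  have h := many_good r u (u ^ (25 * (r + 2))) ⌊4 * (r + 2 : ℝ) * (25 * (r + 2) * Real.log u)⌋₊
  have hXT := XT_lower r u (by omega)
  have hpi := Chebyshev.pi_ge (u ^ (25 * (r + 2)))
  have hu : (4 : ℝ) ≤ u := by exact_mod_cast hu4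
  have hur' : 64 * (25 * ((r : ℝ) + 2)) ≤ u := by exact_mod_cast hur
  have hlu : 1 ≤ Real.log u := by
    rw [Real.le_log_iff_exp_le (by linarith)]
    linarith [Real.exp_one_lt_d9]
  have hlogX : Real.log ((u ^ (25 * (r + 2)) : ℕ) : ℝ) = 25 * (r + 2) * Real.log u := by
    push_cast
    rw [Real.log_pow]
    push_cast; ring
  rw [hlogX] at hpi
  push_cast at h hpi
  have hr0 : (0 : ℝ) ≤ r := Nat.cast_nonneg r
  set k : ℝ := (r + 2 : ℝ) with hk
  set T : ℝ := 25 * k * Real.log u with hT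
  have hT1 : 1 ≤ T := by rw [hT]; nlinarith
  set X : ℝ := (u : ℝ) ^ (25 * (r + 2)) with hX
  have hX1 : 1 ≤ X := one_le_pow₀ (by linarith)
  set H := ⌊4 * k * T⌋₊ with hH
  have hHlt : 4 * k * T < H + 1 := Nat.lt_floor_add_one _
  have hXT0 : 0 ≤ X / T := by positivity
  have hbad : (r + 1) * X / (H + 1) ≤ X / T / 4 := by
    rw [div_div, div_le_div_iff₀ (by positivity) (by positivity)]
    have : (r + 1) * (T * 4) ≤ H + 1 := by nlinarith
    nlinarith
  have hl : Real.log (X + 1) ≤ 1 + T := by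
    have h1 : Real.log (X + 1) ≤ Real.log (2 * X) := Real.log_le_log (by positivity) (by linarith)
    rw [Real.log_mul (by norm_num) (by positivity)] at h1
    have h2 : Real.log X = T := by
      rw [← hlogX]; push_cast; rfl
    linarith [Real.log_two_lt_d9]
  have hpi2 : (69 / 100) * (X / T) - 2 ≤ (Nat.primeCounting (u ^ (25 * (r + 2))) : ℝ) := by
    refine le_trans ?_ hpi
    rw [le_div_iff₀ (by positivity), sub_mul]
    have : 69 / 100 * (X / T) * T = 69 / 100 * X := by field_simp
    rw [this]
    nlinarith [Real.log_two_gt_d9]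
  have h2u : 64 * u ≤ X / T := by
    refine le_trans ?_ hXT
    rw [le_div_iff₀ (by positivity)]
    nlinarith
  have : (u : ℝ) + 1 + (r + 1) + 2 ≤ 2 * u := by linarith
  linarith

def ioWords (q k : ℕ) : Set (Fin k → (ZMod q)ˣ) :=
  {a | {n : ℕ | ∀ i : Fin k, ((pr (n + i) : ℕ) : ZMod q) = (a i : ZMod q)}.Infinite}

lemma exists_word (q k n : ℕ) (hq : 0 < q) (h : q < pr n) :
    ∃ a : Fin k → (ZMod q)ˣ, ∀ i : Fin k, ((pr (n + i) : ℕ) : ZMod q) = (a i : ZMod q) := by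
  have hc : ∀ i : Fin k, Nat.Coprime (pr (n + i)) q := by
    intro i
    rw [Nat.Prime.coprime_iff_not_dvd (pr_prime _)]
    intro hd
    have h1 := Nat.le_of_dvd hq hd
    have h2 : pr n ≤ pr (n + i) := pr_strictMono.monotone (by omega)
    omega
  exact ⟨fun i => ZMod.unitOfCoprime _ (hc i), fun i => by simp⟩

lemma io_lower (r q : ℕ) (hq : 0 < q) (M0 : ℝ)
    (hM0 : ∏ p ∈ Nat.primesLE (4 * (r + 2) ^ 6), (1 - (p : ℝ)⁻¹)⁻¹ ≤ M0) (hM : 0 ≤ M0) :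
    1 / 16 ≤ ((ioWords q (r + 2)).ncard : ℝ) *
      (16 * (r + 2) ^ 2 * (50 * (r + 2) * M0 * Real.exp 4 / q.totient) ^ (r + 2)) := by
  classical
  have : NeZero q := ⟨by omega⟩
  set W : ℝ := 16 * (r + 2) ^ 2 * (50 * (r + 2) * M0 * Real.exp 4 / q.totient) ^ (r + 2) with hW
  set S : (Fin (r + 2) → (ZMod q)ˣ) → Set ℕ := fun a =>
    {n : ℕ | ∀ i : Fin (r + 2), ((pr (n + i) : ℕ) : ZMod q) = (a i : ZMod q)} with hS
  set C : ℝ := ∑ a : Fin (r + 2) → (ZMod q)ˣ, ((S a).ncard : ℝ) with hC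
  obtain ⟨u, h1, h2, h3, h4, h5, h6⟩ := ((word_count_eventually r q hq M0 hM0 hM).and
    ((many_good_eventually r).and ((eventually_ge_atTop 2).and ((eventually_ge_atTop q).and
      ((eventually_ge_atTop (25 * (r + 2))).and
      (tendsto_natCast_atTop_atTop.eventually_ge_atTop (16 * C))))))).exists
  have hXT := XT_lower r u h3
  have hu2 : (2 : ℝ) ≤ u := by exact_mod_cast h3
  have h5' : 25 * ((r : ℝ) + 2) ≤ u := by exact_mod_cast h5
  set H := ⌊4 * (r + 2 : ℝ) * (25 * (r + 2) * Real.log u)⌋₊ with hH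
  set XT := (u : ℝ) ^ (25 * (r + 2)) / (25 * (r + 2) * Real.log u) with hXTd
  have hu : (u : ℝ) ≤ XT := by
    refine le_trans ?_ hXT
    rw [le_div_iff₀ (by positivity)]
    nlinarith
  set X := u ^ (25 * (r + 2)) with hX
  have hgood : (((Finset.range (X + 1)).filter (fun n => pr (n + (r + 1)) ≤ X ∧ u < pr n ∧
        pr (n + (r + 1)) - pr n ≤ H)).card : ℝ) ≤
      ∑ a : Fin (r + 2) → (ZMod q)ˣ, ((goodSet r q (fun i => (a i : ZMod q)) H u X).card : ℝ) := by
    have hsub : (Finset.range (X + 1)).filter (fun n => pr (n + (r + 1)) ≤ X ∧ u < pr n ∧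
        pr (n + (r + 1)) - pr n ≤ H) ⊆ Finset.univ.biUnion
          (fun a : Fin (r + 2) → (ZMod q)ˣ => goodSet r q (fun i => (a i : ZMod q)) H u X) := by
      intro n hn
      obtain ⟨g1, g2, g3, g4⟩ := Finset.mem_filter.1 hn
      obtain ⟨a, ha⟩ := exists_word q (r + 2) n hq (by omega)
      rw [Finset.mem_biUnion]
      exact ⟨a, Finset.mem_univ _, Finset.mem_filter.2 ⟨g1, g2, g3, g4, ha⟩⟩
    have := (Finset.card_le_card hsub).trans Finset.card_biUnion_le
    exact_mod_cast this
  have hterm : ∀ a : Fin (r + 2) → (ZMod q)ˣ,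
      ((goodSet r q (fun i => (a i : ZMod q)) H u X).card : ℝ) ≤
        (if a ∈ ioWords q (r + 2) then W * XT else 0) + ((S a).ncard : ℝ) := by
    intro a
    split_ifs with ha
    · have := h1 (fun i => (a i : ZMod q))
      have h0 : (0 : ℝ) ≤ (S a).ncard := by positivity
      linarith
    · have hfin : (S a).Finite := Set.not_infinite.1 ha
      rw [zero_add]
      have : (goodSet r q (fun i => (a i : ZMod q)) H u X).card ≤ (S a).ncard := by
        rw [← Set.ncard_coe_finset]
        refine Set.ncard_le_ncard ?_ hfin
        intro n hn
        exact (Finset.mem_filter.1 (Finset.mem_coe.1 hn)).2.2.2.2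
      exact_mod_cast this
  have hsum : ∑ a : Fin (r + 2) → (ZMod q)ˣ, (if a ∈ ioWords q (r + 2) then W * XT else 0) =
      ((ioWords q (r + 2)).ncard : ℝ) * (W * XT) := by
    rw [← Finset.sum_filter, Finset.sum_const, nsmul_eq_mul]
    congr 2
    rw [← Set.ncard_coe_finset]
    congr 1
    ext a; simp
  have hfinal := h2.trans (hgood.trans (Finset.sum_le_sum fun a _ => hterm a))
  rw [Finset.sum_add_distrib, hsum, ← hC] at hfinal
  have hXT0 : 0 < XT := by linarith
  have h6' : 16 * C ≤ u := h6
  have : XT * (1 / 16) ≤ XT * (((ioWords q (r + 2)).ncard : ℝ) * W) := by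
    nlinarith
  exact le_of_mul_le_mul_left this hXT0

lemma io_extend (q : ℕ) (hq : 0 < q) {k m : ℕ} (hkm : k ≤ m) :
    (ioWords q k).ncard ≤ (ioWords q m).ncard := by
  classical
  have : NeZero q := ⟨by omega⟩
  set ρ : (Fin m → (ZMod q)ˣ) → (Fin k → (ZMod q)ˣ) := fun a i => a (Fin.castLE hkm i) with hρ
  have hsub : ioWords q k ⊆ ρ '' ioWords q m := by
    intro b hb
    by_contra hcon
    apply hb
    have hcov : {n : ℕ | ∀ i : Fin k, ((pr (n + i) : ℕ) : ZMod q) = (b i : ZMod q)} ⊆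
        Set.Iic q ∪ ⋃ a ∈ {a : Fin m → (ZMod q)ˣ | a ∉ ioWords q m},
          {n : ℕ | ∀ i : Fin m, ((pr (n + i) : ℕ) : ZMod q) = (a i : ZMod q)} := by
      intro n hn
      by_cases hnq : q < pr n
      · right
        obtain ⟨a, ha⟩ := exists_word q m n hq hnq
        refine Set.mem_biUnion (x := a) ?_ ha
        intro hio
        refine hcon ⟨a, hio, ?_⟩
        funext i
        apply Units.ext
        rw [← hn i, hρ]
        exact (ha (Fin.castLE hkm i)).symm
      · left
        have : n ≤ pr n := pr_strictMono.le_apply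
        simp only [Set.mem_Iic]; omega
    refine Set.Finite.subset ((Set.finite_Iic q).union ?_) hcov
    exact Set.Finite.biUnion (Set.toFinite _) fun a ha => Set.not_infinite.1 ha
  exact (Set.ncard_le_ncard hsub (Set.toFinite _)).trans (Set.ncard_image_le (Set.toFinite _))

lemma io_tendsto (q m : ℕ) (a : Fin m → (ZMod q)ˣ) (ha : a ∈ ioWords q m) :
    Tendsto (consecCount q m a) atTop atTop := by
  rw [tendsto_atTop]
  intro N
  obtain ⟨t, ht, hc⟩ := Set.Infinite.exists_subset_card_eq ha N
  filter_upwards [eventually_ge_atTop (∑ n ∈ t, (pr n : ℝ))] with x hx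
  unfold consecCount
  rw [← hc, ← Set.ncard_coe_finset]
  refine Set.ncard_le_ncard ?_ ?_
  · intro n hn
    refine ⟨?_, ht hn⟩
    refine le_trans ?_ hx
    exact Finset.single_le_sum (f := fun n => (pr n : ℝ)) (fun _ _ => Nat.cast_nonneg _)
      (Finset.mem_coe.1 hn)
  · refine (Set.finite_Iic ⌊x⌋₊).subset ?_
    intro n hn
    have h1 : n ≤ pr n := pr_strictMono.le_apply
    have h2 : (pr n : ℝ) ≤ x := hn.1
    exact h1.trans (Nat.le_floor h2)

lemma io_lower' : ∃ A : ℝ, 1 ≤ A ∧ ∀ r q : ℕ, 0 < q →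
    1 ≤ ((ioWords q (r + 2)).ncard : ℝ) *
      (256 * (r + 2) ^ 2 * (A * ((r + 2) * Real.sqrt (r + 2)) / q.totient) ^ (r + 2)) := by
  obtain ⟨C, hC1, hC⟩ := mertens_prod_le
  refine ⟨50 * (2 * C) * Real.exp 4, ?_, fun r q hq => ?_⟩
  · have : 1 ≤ Real.exp 4 := Real.one_le_exp (by norm_num)
    nlinarith
  set k : ℝ := (r + 2 : ℝ) with hk
  have hk0 : 0 < k := by positivity
  have hM : ∏ p ∈ Nat.primesLE (4 * (r + 2) ^ 6), (1 - (p : ℝ)⁻¹)⁻¹ ≤ 2 * C * Real.sqrt k := by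
    refine (hC (4 * (r + 2) ^ 6) (Nat.succ_le_of_lt (by positivity))).trans ?_
    have e : (((4 * (r + 2) ^ 6 : ℕ) : ℝ)) = 4 * k ^ (6 : ℕ) := by push_cast; rfl
    rw [e, Real.mul_rpow (by norm_num) (by positivity), ← Real.rpow_natCast, ← Real.rpow_mul hk0.le,
      Real.sqrt_eq_rpow]
    norm_num
    have h4 : (4 : ℝ) ^ ((1 : ℝ) / 12) ≤ 2 := by
      have e4 : (4 : ℝ) = 2 ^ (2 : ℝ) := by norm_num
      rw [e4, ← Real.rpow_mul (by norm_num)]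
      calc (2 : ℝ) ^ (2 * ((1 : ℝ) / 12)) ≤ 2 ^ (1 : ℝ) :=
            Real.rpow_le_rpow_of_exponent_le (by norm_num) (by norm_num)
        _ = 2 := by norm_num
    norm_num at h4
    have : 0 ≤ k ^ ((1 : ℝ) / 2) := by positivity
    norm_num at this
    nlinarith [mul_nonneg (by linarith : (0 : ℝ) ≤ C) this]
  have := io_lower r q hq _ hM (by positivity)
  rw [← hk] at this
  have e : 50 * k * (2 * C * Real.sqrt k) * Real.exp 4 =
      50 * (2 * C) * Real.exp 4 * (k * Real.sqrt k) := by ring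
  rw [e] at this
  linarith

set_option maxHeartbeats 1000000 in
theorem stmt3 (c : ℝ) (hc0 : 0 < c) (hc1 : c < 1) :
    ∀ᶠ m : ℕ in atTop, ∀ q : ℕ, 0 < q → Squarefree q →
      8 * c⁻¹ * Real.exp 1 ^ 2 * Real.log m ^ 2 < (q.totient : ℝ) →
      (1 - c) * c ^ 5 * (m : ℝ) / (512 * Real.exp 1 ^ 10 * Real.log m ^ 10) *
          ((q.totient : ℝ) * ((q.totient : ℝ) - 1)) ≤
        ({a : Fin m → (ZMod q)ˣ | Tendsto (consecCount q m a) atTop atTop}.ncard : ℝ) := by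
  obtain ⟨A, hA1, hA⟩ := io_lower'
  have hlogt : Tendsto (fun m : ℕ => Real.log m) atTop atTop :=
    Real.tendsto_log_atTop.comp tendsto_natCast_atTop_atTop
  set D : ℝ := 3 * Real.exp 1 * A with hD
  filter_upwards [eventually_ge_atTop 2, hlogt.eventually_ge_atTop 12, hlogt.eventually_ge_atTop (D ^ 2),
    hlogt.eventually_ge_atTop (256 * 36 * A ^ 2 * D ^ 12)] with m hm hL12 hLD hLbig
  intro q hq _ hφ
  have : NeZero q := ⟨by omega⟩
  set L := Real.log m with hL
  set φ : ℝ := (q.totient : ℝ) with hφd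
  have hm0 : (2 : ℝ) ≤ m := by exact_mod_cast hm
  have hφL : L ^ 2 ≤ φ := by
    refine le_trans ?_ hφ.le
    have h1 : 1 ≤ c⁻¹ := (one_le_inv₀ hc0).2 hc1.le
    have h2 : 1 ≤ Real.exp 1 ^ 2 := one_le_pow₀ (Real.one_le_exp (by norm_num))
    have h3 : 1 ≤ 8 * c⁻¹ * Real.exp 1 ^ 2 := by nlinarith
    nlinarith [sq_nonneg L]
  have hφ1 : 1 ≤ φ := by nlinarith
  set r := ⌈L⌉₊ with hr
  have hrL : L ≤ r := Nat.le_ceil L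
  have hrL2 : (r : ℝ) < L + 1 := Nat.ceil_lt_add_one (by linarith)
  have hr12 : 12 ≤ r := by
    have : (12 : ℝ) ≤ r := hL12.trans hrL
    exact_mod_cast this
  -- size of k compared to m
  have hkm : r + 2 ≤ m := by
    have h1 : L + 1 ≤ Real.exp L := Real.add_one_le_exp L
    have h2 : Real.exp L = m := Real.exp_log (by linarith)
    have h3 : Real.exp L = Real.exp (L / 2) * Real.exp (L / 2) := by
      rw [← Real.exp_add]; congr 1; ring
    have h4 : L / 2 + 1 ≤ Real.exp (L / 2) := Real.add_one_le_exp _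
    have h5 : (r : ℝ) + 2 ≤ m := by
      rw [← h2, h3]
      nlinarith
    exact_mod_cast h5
  have hset : (ioWords q m).ncard ≤
      {a : Fin m → (ZMod q)ˣ | Tendsto (consecCount q m a) atTop atTop}.ncard :=
    Set.ncard_le_ncard (fun a ha => io_tendsto q m a ha) (Set.toFinite _)
  have hN : ((ioWords q (r + 2)).ncard : ℝ) ≤
      ({a : Fin m → (ZMod q)ˣ | Tendsto (consecCount q m a) atTop atTop}.ncard : ℝ) := by
    exact_mod_cast (io_extend q hq hkm).trans hset
  refine le_trans ?_ hN
  have hlow := hA r q hq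
  rw [← hφd] at hlow
  set k : ℝ := (r + 2 : ℝ) with hk
  have hk2 : k ≤ 2 * L := by rw [hk]; linarith
  have hk0 : 0 < k := by positivity
  set N : ℝ := ((ioWords q (r + 2)).ncard : ℝ) with hNd
  have hN0 : 0 ≤ N := by positivity
  set s := Real.sqrt L with hs
  have hs0 : 0 < s := Real.sqrt_pos.2 (by linarith)
  have hss : s ^ 2 = L := Real.sq_sqrt (by linarith)
  have hks : k * Real.sqrt k ≤ 3 * s ^ 3 := by
    have h1 : Real.sqrt k ≤ 3 / 2 * s := by
      refine Real.sqrt_le_iff.2 ⟨by positivity, ?_⟩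
      rw [mul_pow, hss]; linarith
    calc k * Real.sqrt k ≤ (2 * s ^ 2) * (3 / 2 * s) := by
          rw [hss]; gcongr
      _ = _ := by ring
  have hDs : D ≤ s := by
    rw [hs]; exact Real.le_sqrt_of_sq_le hLD
  have he1 : 1 ≤ Real.exp 1 := Real.one_le_exp (by norm_num)
  have hD0 : 0 < D := by positivity
  set B := A * (k * Real.sqrt k) with hB
  have hB3 : B ≤ 3 * A * s ^ 3 := by
    rw [hB]; nlinarith
  have hB0 : 0 ≤ B := by positivity
  have hmr : (m : ℝ) ≤ Real.exp 1 ^ r := by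
    rw [← Real.exp_nat_mul, mul_one]
    calc (m : ℝ) = Real.exp L := (Real.exp_log (by linarith)).symm
      _ ≤ _ := Real.exp_le_exp.2 hrL
  have hbase : Real.exp 1 * (B / φ) ≤ D / s := by
    rw [← mul_div_assoc, div_le_div_iff₀ (by linarith) hs0]
    have : s ^ 4 ≤ φ := by
      calc s ^ 4 = L ^ 2 := by rw [← hss]; ring
        _ ≤ φ := hφL
    calc Real.exp 1 * B * s ≤ Real.exp 1 * (3 * A * s ^ 3) * s := by gcongr
      _ = D * s ^ 4 := by rw [hD]; ring
      _ ≤ D * φ := by gcongr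
  have hpow : (Real.exp 1 * (B / φ)) ^ r ≤ D ^ 12 / L ^ 6 := by
    calc (Real.exp 1 * (B / φ)) ^ r ≤ (D / s) ^ r := pow_le_pow_left₀ (by positivity) hbase r
      _ ≤ (D / s) ^ 12 := pow_le_pow_of_le_one (by positivity) ((div_le_one hs0).2 hDs) hr12
      _ = D ^ 12 / L ^ 6 := by rw [div_pow, ← hss]; ring
  have hkey : m * φ ^ 2 * (256 * k ^ 2 * (B / φ) ^ (r + 2)) ≤ 1 := by
    calc m * φ ^ 2 * (256 * k ^ 2 * (B / φ) ^ (r + 2))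
        = 256 * k ^ 2 * B ^ 2 * (m * (B / φ) ^ r) := by
          rw [pow_add]; field_simp
      _ ≤ 256 * (2 * L) ^ 2 * (3 * A * s ^ 3) ^ 2 * (Real.exp 1 ^ r * (B / φ) ^ r) := by
          gcongr
      _ = 256 * (2 * L) ^ 2 * (9 * A ^ 2 * L ^ 3) * (Real.exp 1 * (B / φ)) ^ r := by
          rw [mul_pow (Real.exp 1), ← hss]; ring
      _ ≤ 256 * (2 * L) ^ 2 * (9 * A ^ 2 * L ^ 3) * (D ^ 12 / L ^ 6) := by
          gcongr
      _ = 256 * 36 * A ^ 2 * D ^ 12 / L := by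
          have : L ≠ 0 := by linarith
          field_simp
          ring
      _ ≤ 1 := (div_le_one (by linarith)).2 hLbig
  have hNlow : m * φ ^ 2 ≤ N := by
    set V := 256 * k ^ 2 * (B / φ) ^ (r + 2) with hV
    have hm2 : 0 ≤ m * φ ^ 2 := by positivity
    calc m * φ ^ 2 ≤ m * φ ^ 2 * (N * V) := le_mul_of_one_le_right hm2 hlow
      _ = N * (m * φ ^ 2 * V) := by ring
      _ ≤ N * 1 := by gcongr
      _ = N := mul_one N
  refine le_trans ?_ hNlow
  have hden : 1 ≤ 512 * Real.exp 1 ^ 10 * L ^ 10 := by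
    have h1 : 1 ≤ Real.exp 1 ^ 10 := one_le_pow₀ he1
    have h2 : 1 ≤ L ^ 10 := one_le_pow₀ (by linarith)
    exact one_le_mul_of_one_le_of_one_le
      (one_le_mul_of_one_le_of_one_le (by norm_num) h1) h2
  have hc5 : (1 - c) * c ^ 5 ≤ 1 := by
    have : c ^ 5 ≤ 1 := pow_le_one₀ hc0.le hc1.le
    have : 0 ≤ c ^ 5 := by positivity
    nlinarith
  have hnum : (1 - c) * c ^ 5 * (m : ℝ) ≤ m :=
    mul_le_of_le_one_left (Nat.cast_nonneg m) hc5
  have hc50 : 0 ≤ (1 - c) * c ^ 5 := mul_nonneg (by linarith) (by positivity)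
  have h1 : (1 - c) * c ^ 5 * (m : ℝ) / (512 * Real.exp 1 ^ 10 * L ^ 10) ≤ m :=
    (div_le_self (by positivity) hden).trans hnum
  calc _ ≤ (m : ℝ) * (φ * (φ - 1)) :=
        mul_le_mul_of_nonneg_right h1 (mul_nonneg (by linarith) (by linarith))
    _ ≤ m * φ ^ 2 := by
        refine mul_le_mul_of_nonneg_left ?_ (by linarith)
        nlinarith
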